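/- Let F(T) ∈ ℤ[T] be a fixed nonconstant polynomial of degree D. There is a constant C (depending only on F) such that for every positive integer q and every real number x ≥ 3q, |∑_{p ≤ x, gcd(F(p), q) = 1} 1/p − α(q)·log log x| ≤ C·(log log 3q)^{D+1}, where the sum is over primes p ≤ x with gcd(F(p), q) = 1. -/

import Mathlib

open Finset in
/-- `α(q) = (1/φ(q)) · #{a mod q : gcd(a·F(a), q) = 1}`. -/
noncomputable def alpha (F : Polynomial ℤ) (q : ℕ) : ℝ :=
  (Set.ncard {a : ℕ | a < q ∧ Int.gcd ((a : ℤ) * F.eval (a : ℤ)) (q : ℤ) = 1} : ℝ)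
    / (Nat.totient q : ℝ)

/-!
By Möbius inversion over `gcd(F(p), q)`, the sum is a combination, over squarefree `e ∣ q`, of sums
of `1/p` over primes in at most `C · D ^ ω(e)` residue classes modulo `e`. The primes up to `3q`
contribute at most `log log 3q + O(1)`. Beyond them, a uniform Mertens theorem applies: for
`N ≥ Q ≥ e` and `(b, e) = 1`, the sum of `1/p` over the primes `p ≡ b (mod e)` in `(Q, N]` is
`(log log N - log log Q + O(log 2e)) / φ(e)`. The main terms add up to
`α(q) (log log x - log log 3q)`, and the errors `D ^ ω(e) log(2e) / φ(e)` to
`O((log log 3q) ^ (D + 1))` by an Euler product.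

The uniform Mertens theorem follows from the lower bound `‖L(1, χ)‖ ≫ 1 / d²` for all nonprincipal
`χ` modulo `d`, which makes the error in `∑ log p / p` polynomial in `d` and hence settles the
primes beyond `exp(d ^ O(1))`. Below that limit, the Selberg sieve bounds the sum over `(y, y²]` by
`O(1 / φ(d))` for `y ≥ d³`, and `O(log 2d)` such intervals suffice. The bound for `L(1, χ)` comes
from a Lambert series when `χ² = 1`, and otherwise from `3 + 4 cos θ + cos 2θ ≥ 0`.
-/

section

open Finset Filter Topology ArithmeticFunction
open scoped ArithmeticFunction.Moebius

theorem norm_sum_Ioc_smul_le {E : Type*} [NormedAddCommGroup E] [NormedSpace ℝ E]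
    {a : ℕ → E} {f : ℕ → ℝ} {K : ℝ} {m : ℕ} (ha : ∀ k, ‖∑ i ∈ Ioc m k, a i‖ ≤ K)
    (hf : AntitoneOn f (Set.Ioi m)) (hf₀ : ∀ i, m < i → 0 ≤ f i) (n : ℕ) :
    ‖∑ i ∈ Ioc m n, f i • a i‖ ≤ K * f (m + 1) := by
  have hK : 0 ≤ K := (norm_nonneg _).trans (ha m)
  have step_nonneg : ∀ i, m < i → 0 ≤ f i - f (i + 1) := fun i hi ↦
    sub_nonneg.2 (hf hi (hi.trans i.lt_succ_self) i.le_succ)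
  rcases le_or_gt n m with hnm | hmn
  · simpa [Ioc_eq_empty_of_le hnm] using mul_nonneg hK (hf₀ (m + 1) m.lt_succ_self)
  have by_parts : ∑ i ∈ Ioc m n, f i • a i = f (n + 1) • ∑ i ∈ Ioc m n, a i
      + ∑ i ∈ Ioc m n, (f i - f (i + 1)) • ∑ j ∈ Ioc m i, a j := by
    clear ha hf hf₀ step_nonneg
    induction n, hmn.le using Nat.le_induction with
    | base => simp
    | succ k hk ih =>
      rcases hk.eq_or_lt with rfl | hk'
      · simp only [sum_Ioc_succ_top le_rfl, Ioc_self, sum_empty, zero_add]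
        module
      · simp only [sum_Ioc_succ_top hk, ih hk']
        module
  have telescope : ∑ i ∈ Ioc m n, (f i - f (i + 1)) = f (m + 1) - f (n + 1) := by
    rw [← Ico_add_one_add_one_eq_Ioc, sum_Ico_eq_sub _ (by lia), sum_range_sub', sum_range_sub']
    ring
  rw [by_parts]
  calc ‖f (n + 1) • ∑ i ∈ Ioc m n, a i + ∑ i ∈ Ioc m n, (f i - f (i + 1)) • ∑ j ∈ Ioc m i, a j‖
      ≤ ‖f (n + 1) • ∑ i ∈ Ioc m n, a i‖
        + ∑ i ∈ Ioc m n, ‖(f i - f (i + 1)) • ∑ j ∈ Ioc m i, a j‖ :=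
        (norm_add_le _ _).trans (by gcongr; exact norm_sum_le _ _)
    _ ≤ f (n + 1) * K + ∑ i ∈ Ioc m n, (f i - f (i + 1)) * K := by
        gcongr with i hi
        · rw [norm_smul, Real.norm_of_nonneg (hf₀ _ (by lia))]
          exact mul_le_mul_of_nonneg_left (ha n) (hf₀ _ (by lia))
        · rw [norm_smul, Real.norm_of_nonneg (step_nonneg i (mem_Ioc.1 hi).1)]
          exact mul_le_mul_of_nonneg_left (ha i) (step_nonneg i (mem_Ioc.1 hi).1)
    _ = K * f (m + 1) := by rw [← sum_mul, telescope]; ring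

theorem sum_Ioc_sum_divisorsAntidiagonal {E : Type*} [AddCommMonoid E] (F : ℕ → ℕ → E) (N : ℕ) :
    ∑ n ∈ Ioc 0 N, ∑ x ∈ n.divisorsAntidiagonal, F x.1 x.2
      = ∑ m ∈ Ioc 0 N, ∑ k ∈ Ioc 0 (N / m), F m k := by
  rw [sum_sigma', sum_sigma']
  refine sum_nbij' (fun x ↦ ⟨x.2.1, x.2.2⟩) (fun x ↦ ⟨x.1 * x.2, (x.1, x.2)⟩) ?_ ?_ ?_
    (fun _ _ ↦ rfl) (fun _ _ ↦ rfl)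
  · rintro ⟨n, a, b⟩ h
    simp only [mem_sigma, mem_Ioc, Nat.mem_divisorsAntidiagonal] at h ⊢
    obtain ⟨⟨hn, hnN⟩, rfl, -⟩ := h
    have ha := Nat.pos_of_mul_pos_right hn
    have hb := Nat.pos_of_mul_pos_left hn
    exact ⟨⟨ha, (Nat.le_mul_of_pos_right _ hb).trans hnN⟩, hb,
      (Nat.le_div_iff_mul_le ha).2 (mul_comm a b ▸ hnN)⟩
  · rintro ⟨a, b⟩ h
    simp only [mem_sigma, mem_Ioc, Nat.mem_divisorsAntidiagonal] at h ⊢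
    obtain ⟨⟨ha, -⟩, hb, hab⟩ := h
    exact ⟨⟨Nat.mul_pos ha hb, mul_comm a b ▸ (Nat.le_div_iff_mul_le ha).1 hab⟩, trivial,
      (Nat.mul_pos ha hb).ne'⟩
  · rintro ⟨n, a, b⟩ h
    simp only [mem_sigma, Nat.mem_divisorsAntidiagonal] at h
    simp [h.2.1]

theorem div_floor_add_one_le {N m : ℕ} (hN : 0 < N) (hm : 0 < m) {c : ℝ} (hc : 0 ≤ c) :
    c / ((N / m : ℕ) + 1) ≤ c * m / N := by
  have hlt : (N : ℝ) / m < (N / m : ℕ) + 1 := by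
    rw [← Nat.floor_div_eq_div (K := ℝ)]
    exact Nat.lt_floor_add_one _
  rw [← div_div_eq_mul_div]
  gcongr

theorem sum_Ioc_log_eq_log_factorial (N : ℕ) :
    ∑ n ∈ Ioc 0 N, Real.log n = Real.log N.factorial := by
  induction N with
  | zero => simp
  | succ N ih =>
    rw [sum_Ioc_succ_top N.zero_le, ih, Nat.factorial_succ, Nat.cast_mul,
      Real.log_mul (by positivity) (by positivity), add_comm]

theorem mul_log_sub_le_log_factorial (N : ℕ) :
    N * Real.log N - N ≤ Real.log N.factorial := by
  rcases N.eq_zero_or_pos with rfl | hN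
  · simp
  have h := Real.log_le_log (by positivity)
    (Real.pow_div_factorial_le_exp (N : ℝ) (by positivity) N)
  rw [Real.log_exp, Real.log_div (by positivity) (by positivity), Real.log_pow] at h
  linarith

theorem log_factorial_le_mul_log (N : ℕ) : Real.log N.factorial ≤ N * Real.log N := by
  rw [← Real.log_pow]
  exact Real.log_le_log (mod_cast N.factorial_pos) (mod_cast N.factorial_le_pow)

theorem sum_Ioc_inv_le_one_add_log (N : ℕ) : ∑ n ∈ Ioc 0 N, (n : ℝ)⁻¹ ≤ 1 + Real.log N := by
  have h := harmonic_le_one_add_log N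
  rw [harmonic_eq_sum_Icc, ← zero_add 1, Icc_add_one_left_eq_Ioc] at h
  push_cast at h
  exact h

theorem sum_Ioc_vonMangoldt_le (N : ℕ) : ∑ n ∈ Ioc 0 N, Λ n ≤ 6 * N := by
  have h := Chebyshev.psi_le_const_mul_self (x := (N : ℝ)) N.cast_nonneg
  rw [Chebyshev.psi, Nat.floor_natCast] at h
  have log_four : Real.log 4 ≤ 2 := by
    rw [show (4 : ℝ) = 2 ^ 2 by norm_num, Real.log_pow]
    push_cast
    linarith [Real.log_two_lt_d9]
  exact h.trans (by gcongr; linarith)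

theorem abs_sum_Ioc_vonMangoldt_div_sub_log_le {N : ℕ} (hN : 0 < N) :
    |∑ n ∈ Ioc 0 N, Λ n / n - Real.log N| ≤ 6 := by
  have hN' : (0 : ℝ) < N := mod_cast hN
  have legendre : Real.log N.factorial = ∑ m ∈ Ioc 0 N, Λ m * (N / m : ℕ) := by
    rw [← sum_Ioc_mul_zeta_eq_sum, vonMangoldt_mul_zeta, ← sum_Ioc_log_eq_log_factorial]
    rfl
  have upper : Real.log N.factorial ≤ N * ∑ n ∈ Ioc 0 N, Λ n / n := by
    rw [legendre, mul_sum]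
    refine sum_le_sum fun m _ ↦ ?_
    rw [mul_div_left_comm]
    exact mul_le_mul_of_nonneg_left Nat.cast_div_le vonMangoldt_nonneg
  have lower : N * ∑ n ∈ Ioc 0 N, Λ n / n ≤ Real.log N.factorial + 6 * N := by
    refine le_trans ?_ (add_le_add_right (sum_Ioc_vonMangoldt_le N) _)
    rw [legendre, mul_sum, ← sum_add_distrib]
    refine sum_le_sum fun m _ ↦ ?_
    rw [mul_div_left_comm, ← mul_add_one]
    refine mul_le_mul_of_nonneg_left ?_ vonMangoldt_nonneg
    rw [← Nat.floor_div_eq_div (K := ℝ)]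
    exact (Nat.lt_floor_add_one _).le
  have hlow := mul_log_sub_le_log_factorial N
  have hup := log_factorial_le_mul_log N
  rw [abs_le]
  constructor <;> refine le_of_mul_le_mul_left ?_ hN' <;> linarith

theorem sum_Ioc_natCast_zmod {E : Type*} [AddCommMonoid E] (d : ℕ) [NeZero d] (f : ZMod d → E)
    (m : ℕ) : ∑ i ∈ Ioc m (m + d), f i = ∑ x, f x := by
  have inj : Set.InjOn ((↑) : ℕ → ZMod d) (Ioc m (m + d)) := by
    intro i hi j hj hij
    rw [← Ico_add_one_add_one_eq_Ioc, add_right_comm] at hi hj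
    exact Nat.mod_injOn_Ico (m + 1) d (by simpa using hi) (by simpa using hj)
      ((ZMod.natCast_eq_natCast_iff' _ _ _).1 hij)
  have surj : (Ioc m (m + d)).image ((↑) : ℕ → ZMod d) = univ :=
    eq_univ_of_card _ <| by
      rw [card_image_of_injOn inj, Nat.card_Ioc, ZMod.card, Nat.add_sub_cancel_left]
  rw [← surj, sum_image inj]

section Character

variable {d : ℕ} [NeZero d] {χ : DirichletCharacter ℂ d}

theorem norm_sum_Ioc_dirichletCharacter_le (hχ : χ ≠ 1) (m k : ℕ) :
    ‖∑ i ∈ Ioc m k, χ i‖ ≤ d := by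
  induction h : k - m using Nat.strong_induction_on generalizing m with
  | _ t ih =>
    rcases le_or_gt (k - m) d with hkd | hdk
    · calc ‖∑ i ∈ Ioc m k, χ i‖ ≤ ∑ i ∈ Ioc m k, 1 :=
            norm_sum_le_of_le _ fun i _ ↦ χ.norm_le_one _
        _ ≤ d := by
            rw [sum_const, Nat.card_Ioc, nsmul_one]
            exact_mod_cast hkd
    · rw [← sum_Ioc_consecutive _ (m.le_add_right d) (by lia), sum_Ioc_natCast_zmod d χ,
        MulChar.sum_eq_zero_of_ne_one hχ, zero_add]
      have := NeZero.pos d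
      exact ih _ (by lia) _ rfl

variable (χ) in
/-- The value `L(1, χ) = ∑ χ(n) / n`, as the limit of the partial sums in their natural order (the
series converges only conditionally). It is a junk value for the trivial character. -/
noncomputable def LOne : ℂ := limUnder atTop fun N : ℕ ↦ ∑ n ∈ Ioc 0 N, χ n / n

theorem norm_sum_div_sub_LOne_le (hχ : χ ≠ 1) (N : ℕ) :
    ‖∑ n ∈ Ioc 0 N, χ n / n - LOne χ‖ ≤ d / (N + 1) := by
  have tail : ∀ m M : ℕ, m ≤ M →
      ‖∑ n ∈ Ioc 0 M, χ n / n - ∑ n ∈ Ioc 0 m, χ n / n‖ ≤ d / (m + 1) := by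
    intro m M hmM
    rw [← sum_Ioc_consecutive _ m.zero_le hmM, add_sub_cancel_left]
    have antitone : AntitoneOn (fun n : ℕ ↦ (n : ℝ)⁻¹) (Set.Ioi m) := fun i hi j _ hij ↦ by
      have : (0 : ℝ) < i := mod_cast (Nat.zero_le m).trans_lt hi
      simp only
      gcongr
    convert norm_sum_Ioc_smul_le (norm_sum_Ioc_dirichletCharacter_le hχ m) antitone
      (fun _ _ ↦ by positivity) M using 1
    · simp [div_eq_inv_mul]
    · push_cast
      rfl
  have cauchy : CauchySeq fun N : ℕ ↦ ∑ n ∈ Ioc 0 N, χ n / n := by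
    refine cauchySeq_of_le_tendsto_0' (fun N : ℕ ↦ (d : ℝ) / (N + 1)) (fun n m h ↦ ?_) ?_
    · rw [dist_comm, dist_eq_norm]
      exact tail n m h
    · exact_mod_cast (tendsto_const_div_atTop_nhds_zero_nat (d : ℝ)).comp (tendsto_add_atTop_nat 1)
  rw [norm_sub_rev]
  exact le_of_tendsto (cauchy.tendsto_limUnder.sub_const _).norm
    (eventually_atTop.2 ⟨N, fun M ↦ tail N M⟩)

theorem norm_sum_mul_sum_divisors_sub_LOne_mul_le (hχ : χ ≠ 1) (f : ℕ → ℝ) {N : ℕ} (hN : 0 < N) :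
    ‖∑ n ∈ Ioc 0 N, χ n / n * (∑ e ∈ n.divisors, f e : ℝ)
        - LOne χ * ∑ m ∈ Ioc 0 N, χ m / m * f m‖ ≤ d / N * ∑ m ∈ Ioc 0 N, |f m| := by
  have expand : ∑ n ∈ Ioc 0 N, χ n / n * (∑ e ∈ n.divisors, f e : ℝ)
      = ∑ m ∈ Ioc 0 N, χ m / m * f m * ∑ k ∈ Ioc 0 (N / m), χ k / k := by
    simp_rw [mul_sum]
    rw [← sum_Ioc_sum_divisorsAntidiagonal]
    refine sum_congr rfl fun n _ ↦ ?_
    rw [← Nat.sum_divisorsAntidiagonal (f := fun i _ ↦ f i), Complex.ofReal_sum, mul_sum]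
    refine sum_congr rfl fun x hx ↦ ?_
    rw [← (Nat.mem_divisorsAntidiagonal.1 hx).1]
    push_cast
    rw [map_mul]
    ring
  rw [expand, mul_sum, ← sum_sub_distrib, mul_sum]
  refine norm_sum_le_of_le _ fun m hm ↦ ?_
  have hm₀ : 0 < m := (mem_Ioc.1 hm).1
  calc ‖χ m / m * f m * ∑ k ∈ Ioc 0 (N / m), χ k / k - LOne χ * (χ m / m * f m)‖
      = ‖χ m‖ * (|f m| / m) * ‖∑ k ∈ Ioc 0 (N / m), χ k / k - LOne χ‖ := by
        rw [mul_comm (LOne χ), ← mul_sub, norm_mul, norm_mul, norm_div, Complex.norm_natCast,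
          Complex.norm_real, Real.norm_eq_abs]
        ring
    _ ≤ 1 * (|f m| / m) * (d * m / N) := by
        gcongr
        · exact χ.norm_le_one _
        · exact (norm_sum_div_sub_LOne_le hχ _).trans
            (div_floor_add_one_le hN hm₀ (Nat.cast_nonneg d))
    _ = d / N * |f m| := by
        field_simp

variable (χ) in
/-- The partial sum `∑_{n ≤ N} χ(n) Λ(n) / n` of the logarithmic derivative `-L'/L` at `1`. -/
noncomputable def vonMangoldtSum (N : ℕ) : ℂ := ∑ n ∈ Ioc 0 N, χ n / n * Λ n

theorem norm_sum_mul_log_le (hχ : χ ≠ 1) (N : ℕ) :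
    ‖∑ n ∈ Ioc 0 N, χ n / n * Real.log n‖ ≤ 2 * d := by
  have hd : (1 : ℝ) ≤ d := mod_cast NeZero.one_le
  have log_div_le_one : ∀ n : ℕ, Real.log n / n ≤ 1 := fun n ↦
    div_le_one_of_le₀ (Real.log_le_self n.cast_nonneg) n.cast_nonneg
  have head : ∀ m : ℕ, m ≤ 2 → ‖∑ n ∈ Ioc 0 m, χ n / n * Real.log n‖ ≤ d := by
    have two : ‖χ 2 / 2 * Real.log 2‖ ≤ 1 := by
      rw [div_mul_comm, norm_mul]
      refine mul_le_one₀ ?_ (norm_nonneg _) (χ.norm_le_one _)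
      rw [← Complex.ofReal_ofNat, ← Complex.ofReal_div, Complex.norm_real, Real.norm_of_nonneg]
      · exact mod_cast log_div_le_one 2
      · positivity
    intro m hm
    interval_cases m
    · simp
    · simp
    · simpa [sum_Ioc_succ_top] using two.trans hd
  rcases le_or_gt N 2 with hN | hN
  · linarith [head N hN]
  have antitone : AntitoneOn (fun n : ℕ ↦ Real.log n / n) (Set.Ioi 2) := by
    have three_le : ∀ n : ℕ, 2 < n → Real.exp 1 ≤ n := fun n hn ↦ by
      have : (3 : ℝ) ≤ n := mod_cast hn
      linarith [Real.exp_one_lt_d9]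
    exact fun i hi j hj hij ↦ Real.log_div_self_antitoneOn (three_le i hi) (three_le j hj)
      (Nat.cast_le.2 hij)
  have tail : ‖∑ n ∈ Ioc 2 N, χ n / n * Real.log n‖ ≤ d * (Real.log (2 + 1 : ℕ) / (2 + 1 : ℕ)) := by
    have abel := norm_sum_Ioc_smul_le (norm_sum_Ioc_dirichletCharacter_le hχ 2) antitone
      (fun n _ ↦ by positivity) N
    refine (congrArg norm (sum_congr rfl fun n _ ↦ ?_)).trans_le abel
    rw [Complex.real_smul]
    push_cast
    ring
  rw [← sum_Ioc_consecutive _ (Nat.zero_le 2) hN.le, two_mul]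
  exact (norm_add_le _ _).trans (add_le_add (head 2 le_rfl)
    (tail.trans (mul_le_of_le_one_right d.cast_nonneg (log_div_le_one _))))

theorem norm_LOne_mul_norm_vonMangoldtSum_le (hχ : χ ≠ 1) (N : ℕ) :
    ‖LOne χ‖ * ‖vonMangoldtSum χ N‖ ≤ 8 * d := by
  rcases N.eq_zero_or_pos with rfl | hN
  · simp [vonMangoldtSum]
  have hyp := norm_sum_mul_sum_divisors_sub_LOne_mul_le hχ (fun n ↦ Λ n) hN
  simp only [vonMangoldt_sum, abs_of_nonneg vonMangoldt_nonneg] at hyp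
  have err : d / N * ∑ n ∈ Ioc 0 N, Λ n ≤ 6 * d := by
    calc d / N * ∑ n ∈ Ioc 0 N, Λ n ≤ d / N * (6 * N) := by gcongr; exact sum_Ioc_vonMangoldt_le N
      _ = 6 * d := by field_simp
  rw [← norm_mul, vonMangoldtSum]
  linarith [norm_le_insert (∑ n ∈ Ioc 0 N, χ n / n * Real.log n)
    (LOne χ * ∑ n ∈ Ioc 0 N, χ n / n * Λ n), norm_sum_mul_log_le hχ N]

theorem sum_divisors_moebius (n : ℕ) : ∑ e ∈ n.divisors, μ e = if n = 1 then 1 else 0 := by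
  rw [← coe_mul_zeta_apply, moebius_mul_coe_zeta, one_apply]

theorem sum_divisors_moebius_mul_log_sub (n : ℕ) (x : ℝ) :
    ∑ e ∈ n.divisors, (μ e : ℝ) * (x - Real.log e) = (if n = 1 then x else 0) + Λ n := by
  have sum_moebius : ∑ e ∈ n.divisors, (μ e : ℝ) = if n = 1 then 1 else 0 :=
    mod_cast sum_divisors_moebius n
  have sum_moebius_log := sum_moebius_mul_log_eq (n := n)
  simp only [log_apply] at sum_moebius_log
  simp only [mul_sub, sum_sub_distrib, ← sum_mul, sum_moebius, ite_mul, one_mul, zero_mul]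
  rw [sum_moebius_log, sub_neg_eq_add]

theorem abs_moebius_mul_log_sub_le {m N : ℕ} (hm : m ∈ Ioc 0 N) :
    |(μ m : ℝ) * (Real.log N - Real.log m)| ≤ Real.log N - Real.log m := by
  obtain ⟨hm₀, hmN⟩ := mem_Ioc.1 hm
  have : Real.log m ≤ Real.log N := Real.log_le_log (mod_cast hm₀) (mod_cast hmN)
  rw [abs_mul, abs_of_nonneg (sub_nonneg.2 this)]
  exact mul_le_of_le_one_left (sub_nonneg.2 this) (mod_cast abs_moebius_le_one)

theorem sum_abs_moebius_mul_log_sub_le (N : ℕ) :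
    ∑ m ∈ Ioc 0 N, |(μ m : ℝ) * (Real.log N - Real.log m)| ≤ N := by
  refine (sum_le_sum fun m hm ↦ abs_moebius_mul_log_sub_le hm).trans ?_
  rw [sum_sub_distrib, sum_Ioc_log_eq_log_factorial, sum_const, Nat.card_Ioc, Nat.sub_zero,
    nsmul_eq_mul]
  linarith [mul_log_sub_le_log_factorial N]

theorem norm_vonMangoldtSum_add_log_le (hχ : χ ≠ 1) {N : ℕ} (hN : 0 < N) :
    ‖vonMangoldtSum χ N + Real.log N‖
      ≤ ‖LOne χ‖ * (Real.log N * (1 + Real.log N)) + d := by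
  set f : ℕ → ℝ := fun m ↦ (μ m : ℝ) * (Real.log N - Real.log m)
  have hyp := norm_sum_mul_sum_divisors_sub_LOne_mul_le hχ f hN
  have left : ∑ n ∈ Ioc 0 N, χ n / n * (∑ e ∈ n.divisors, f e : ℝ)
      = vonMangoldtSum χ N + Real.log N := by
    have eq : ∀ n ∈ Ioc 0 N, χ n / n * (∑ e ∈ n.divisors, f e : ℝ)
        = χ n / n * Λ n + if n = 1 then (Real.log N : ℂ) else 0 := fun n _ ↦ by
      rw [sum_divisors_moebius_mul_log_sub]
      split_ifs with h
      · simp [h]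
      · simp
    rw [sum_congr rfl eq, sum_add_distrib, sum_ite_eq', if_pos (mem_Ioc.2 ⟨one_pos, hN⟩),
      vonMangoldtSum]
  have right : ‖∑ m ∈ Ioc 0 N, χ m / m * f m‖ ≤ Real.log N * (1 + Real.log N) := by
    calc ‖∑ m ∈ Ioc 0 N, χ m / m * f m‖ ≤ ∑ m ∈ Ioc 0 N, Real.log N * (m : ℝ)⁻¹ := by
          refine norm_sum_le_of_le _ fun m hm ↦ ?_
          rw [div_mul_comm, norm_mul, norm_div, Complex.norm_real, Complex.norm_natCast,
            Real.norm_eq_abs, ← div_eq_mul_inv]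
          refine (mul_le_of_le_one_right (by positivity) (χ.norm_le_one _)).trans ?_
          gcongr
          exact (abs_moebius_mul_log_sub_le hm).trans (sub_le_self _ (Real.log_natCast_nonneg m))
      _ ≤ Real.log N * (1 + Real.log N) := by
          rw [← mul_sum]
          gcongr
          exact sum_Ioc_inv_le_one_add_log N
  have err : d / N * ∑ m ∈ Ioc 0 N, |f m| ≤ d := by
    calc d / N * ∑ m ∈ Ioc 0 N, |f m| ≤ d / N * N := by
          gcongr
          exact sum_abs_moebius_mul_log_sub_le N
      _ = d := by field_simp
  rw [left] at hyp
  have main := mul_le_mul_of_nonneg_left right (norm_nonneg (LOne χ))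
  rw [← norm_mul] at main
  linarith [norm_le_insert' (vonMangoldtSum χ N + Real.log N)
    (LOne χ * ∑ m ∈ Ioc 0 N, χ m / m * f m)]

end Character

theorem natCast_mul_pow_le_sum_sq_pow (u : ℝ) (n : ℕ) :
    n * u ^ (n - 1) ≤ ∑ i ∈ range n, (u ^ 2) ^ i := by
  have am_gm : ∑ _i ∈ range n, 2 * u ^ (n - 1)
      ≤ ∑ i ∈ range n, ((u ^ 2) ^ i + (u ^ 2) ^ (n - 1 - i)) := by
    refine sum_le_sum fun i hi ↦ ?_
    have hi' := mem_range.1 hi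
    have split : u ^ (n - 1) = u ^ i * u ^ (n - 1 - i) := by
      rw [← pow_add]
      congr 1
      lia
    rw [split, pow_right_comm, pow_right_comm u 2, ← mul_assoc]
    exact two_mul_le_add_sq _ _
  rw [sum_add_distrib, sum_range_reflect (fun i ↦ (u ^ 2) ^ i), sum_const, card_range,
    nsmul_eq_mul] at am_gm
  linarith

theorem mul_mul_pow_le_geom_sum_mul_geom_sum {t : ℝ} (h₀ : 0 ≤ t) (h₁ : t ≤ 1) (n : ℕ) :
    n * (n + 1) * t ^ n ≤ (∑ i ∈ range n, t ^ i) * ∑ i ∈ range (n + 1), t ^ i := by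
  obtain ⟨u, hu, rfl⟩ : ∃ u : ℝ, 0 ≤ u ∧ u ^ 2 = t := ⟨√t, t.sqrt_nonneg, Real.sq_sqrt h₀⟩
  have hu₁ : u ≤ 1 := (sq_le_one_iff₀ hu).1 h₁
  calc n * (n + 1) * (u ^ 2) ^ n
      ≤ n * (n + 1) * (u ^ (n - 1) * u ^ n) := by
        rw [← pow_add, ← pow_mul]
        gcongr ?_ * ?_
        exact pow_le_pow_of_le_one hu hu₁ (by lia)
    _ = (n * u ^ (n - 1)) * ((n + 1 : ℕ) * u ^ (n + 1 - 1)) := by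
        push_cast [Nat.add_sub_cancel]
        ring
    _ ≤ _ := by
        gcongr
        · exact natCast_mul_pow_le_sum_sq_pow u n
        · exact natCast_mul_pow_le_sum_sq_pow u (n + 1)

/-- The weights `1 / (n (1 - t)) - t ^ n / (1 - t ^ n)` of Monsky's elementary proof that
`L(1, χ) ≠ 0`: the difference between a harmonic series and a Lambert series. -/
noncomputable def lambertDefect (t : ℝ) (n : ℕ) : ℝ := 1 / (n * (1 - t)) - t ^ n / (1 - t ^ n)

section LambertDefect

variable {t : ℝ}

theorem lambertDefect_eq (n : ℕ) :
    lambertDefect t n = (1 / n - t ^ n / ∑ i ∈ range n, t ^ i) / (1 - t) := by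
  rw [lambertDefect, ← mul_neg_geom_sum]
  simp only [sub_div, div_div, mul_comm]

theorem antitoneOn_lambertDefect (h₀ : 0 < t) (h₁ : t < 1) :
    AntitoneOn (lambertDefect t) (Set.Ioi 0) := by
  refine antitoneOn_of_add_one_le Set.ordConnected_Ioi fun n _ hn _ ↦ ?_
  have hn' : (0 : ℝ) < n := mod_cast hn
  simp only [lambertDefect_eq]
  have product := mul_mul_pow_le_geom_sum_mul_geom_sum h₀.le h₁.le n
  have succ : ∑ i ∈ range (n + 1), t ^ i = t * ∑ i ∈ range n, t ^ i + 1 := by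
    simp [sum_range_succ', mul_sum, pow_succ']
  have hS : 0 < ∑ i ∈ range n, t ^ i := sum_pos (fun i _ ↦ by positivity) ⟨0, by simpa using hn⟩
  set S := ∑ i ∈ range n, t ^ i
  set S' := ∑ i ∈ range (n + 1), t ^ i
  have hS' : 0 < S' := by rw [succ]; positivity
  have geom : t ^ n / S - t ^ (n + 1) / S' = t ^ n / (S * S') := by
    rw [div_sub_div _ _ hS.ne' hS'.ne', succ, pow_succ]
    ring
  have harm : (1 : ℝ) / n - 1 / (n + 1) = 1 / (n * (n + 1)) := by
    field_simp
    ring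
  have step : t ^ n / (S * S') ≤ 1 / (n * (n + 1)) := by
    rw [div_le_div_iff₀ (by positivity) (by positivity)]
    linarith
  refine div_le_div_of_nonneg_right ?_ (sub_pos.2 h₁).le
  push_cast
  linarith

theorem lambertDefect_nonneg (h₀ : 0 ≤ t) (h₁ : t < 1) (n : ℕ) : 0 ≤ lambertDefect t n := by
  rw [lambertDefect_eq]
  rcases n.eq_zero_or_pos with rfl | hn
  · simp
  have hS : 0 < ∑ i ∈ range n, t ^ i :=
    sum_pos' (fun i _ ↦ by positivity) ⟨0, by simpa using hn, by simp⟩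
  refine div_nonneg (sub_nonneg.2 ?_) (sub_pos.2 h₁).le
  rw [div_le_div_iff₀ hS (mod_cast hn), one_mul]
  calc t ^ n * n = ∑ _i ∈ range n, t ^ n := by simp [mul_comm]
    _ ≤ ∑ i ∈ range n, t ^ i :=
        sum_le_sum fun i hi ↦ pow_le_pow_of_le_one h₀ h₁.le (mem_range.1 hi).le

theorem abs_geom_sum_sub_le (h₀ : 0 < t) (h₁ : t < 1) {m : ℕ} (hm : 0 < m) (X : ℕ) :
    |∑ k ∈ Ioc 0 (X / m), t ^ (m * k) - t ^ m / (1 - t ^ m)| ≤ t ^ X / (1 - t) := by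
  have htm : t ^ m ≤ t := pow_le_of_le_one h₀.le h₁.le hm.ne'
  have geom : ∀ K : ℕ, ∑ k ∈ Ioc 0 K, t ^ (m * k)
      = t ^ m / (1 - t ^ m) - t ^ (m * (K + 1)) / (1 - t ^ m) := by
    intro K
    have : 1 - t ^ m ≠ 0 := by linarith
    induction K with
    | zero => simp
    | succ K ih =>
      rw [sum_Ioc_succ_top K.zero_le, ih, pow_mul, pow_mul]
      field_simp
      ring
  rw [geom, sub_sub_cancel_left, abs_neg,
    abs_of_nonneg (div_nonneg (by positivity) (by linarith))]
  gcongr ?_ / ?_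
  · exact pow_le_pow_of_le_one h₀.le h₁.le (Nat.lt_mul_div_succ X hm).le
  · linarith

end LambertDefect

section Quadratic

variable {d : ℕ} {χ : DirichletCharacter ℂ d} {t : ℝ}

theorem zetaMul_apply (χ : DirichletCharacter ℂ d) (n : ℕ) :
    χ.zetaMul n = ∑ e ∈ n.divisors, χ e := by
  rw [DirichletCharacter.zetaMul, coe_zeta_mul_apply]
  refine sum_congr rfl fun e he ↦ ?_
  rw [toArithmeticFunction, coe_mk, if_neg (Nat.pos_of_mem_divisors he).ne']

open ComplexOrder in
theorem one_le_zetaMul_sq (hχ : χ ^ 2 = 1) {n : ℕ} (hn : n ≠ 0) : 1 ≤ χ.zetaMul (n ^ 2) := by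
  induction n using Nat.recOnPosPrimePosCoprime with
  | zero => contradiction
  | one => simp [χ.isMultiplicative_zetaMul.map_one]
  | prime_pow p k hp _ =>
    rw [← pow_mul, zetaMul_apply, Nat.sum_divisors_prime_pow hp]
    simp only [Nat.cast_pow, map_pow]
    rcases MulChar.isQuadratic_iff_sq_eq_one.mpr hχ p with h | h | h
    · simp [h, sum_range_succ', zero_pow]
    · simp only [h, one_pow, sum_const, card_range, nsmul_eq_mul, mul_one]
      exact_mod_cast Nat.le_add_left 1 (k * 2)
    · rw [h, neg_one_geom_sum, if_neg (by simp [parity_simps])]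
  | coprime a b ha hb hab iha ihb =>
    rw [mul_pow, χ.isMultiplicative_zetaMul.map_mul_of_coprime (Nat.Coprime.pow 2 2 hab)]
    exact one_le_mul_of_one_le_of_one_le (iha (by lia)) (ihb (by lia))

theorem mul_pow_le_re_sum_zetaMul_mul_pow (hχ : χ ^ 2 = 1) (h₀ : 0 ≤ t) (h₁ : t ≤ 1) {N X : ℕ}
    (hX : N ^ 2 ≤ X) : N * t ^ N ^ 2 ≤ (∑ n ∈ Ioc 0 X, χ.zetaMul n * (t ^ n : ℝ)).re := by
  simp only [Complex.re_sum, Complex.re_mul_ofReal]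
  calc N * t ^ N ^ 2 = ∑ _k ∈ Ioc 0 N, t ^ N ^ 2 := by simp
    _ ≤ ∑ k ∈ Ioc 0 N, (χ.zetaMul (k ^ 2)).re * t ^ k ^ 2 := by
        refine sum_le_sum fun k hk ↦ ?_
        obtain ⟨hk₀, hkN⟩ := mem_Ioc.1 hk
        refine (pow_le_pow_of_le_one h₀ h₁ (Nat.pow_le_pow_left hkN 2)).trans ?_
        exact le_mul_of_one_le_left (by positivity)
          (Complex.le_def.1 (one_le_zetaMul_sq hχ hk₀.ne')).1
    _ = ∑ n ∈ (Ioc 0 N).image (· ^ 2), (χ.zetaMul n).re * t ^ n :=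
        (sum_image (f := fun n ↦ (χ.zetaMul n).re * t ^ n)
          (Nat.pow_left_injective two_ne_zero).injOn).symm
    _ ≤ ∑ n ∈ Ioc 0 X, (χ.zetaMul n).re * t ^ n := by
        refine sum_le_sum_of_subset_of_nonneg (image_subset_iff.2 fun k hk ↦ ?_) fun n _ _ ↦
          mul_nonneg (Complex.le_def.1 (DirichletCharacter.zetaMul_nonneg hχ n)).1 (by positivity)
        obtain ⟨hk₀, hkN⟩ := mem_Ioc.1 hk
        exact mem_Ioc.2 ⟨pow_pos hk₀ 2, (Nat.pow_le_pow_left hkN 2).trans hX⟩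

theorem sum_zetaMul_mul_pow (X : ℕ) :
    ∑ n ∈ Ioc 0 X, χ.zetaMul n * (t ^ n : ℝ)
      = ∑ m ∈ Ioc 0 X, χ m * (∑ k ∈ Ioc 0 (X / m), t ^ (m * k) : ℝ) := by
  simp only [Complex.ofReal_sum, mul_sum]
  rw [← sum_Ioc_sum_divisorsAntidiagonal]
  refine sum_congr rfl fun n _ ↦ ?_
  rw [zetaMul_apply, ← Nat.sum_divisorsAntidiagonal (f := fun i _ ↦ χ i), sum_mul]
  refine sum_congr rfl fun x hx ↦ ?_
  rw [(Nat.mem_divisorsAntidiagonal.1 hx).1]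

theorem norm_sum_zetaMul_mul_pow_sub_le (h₀ : 0 < t) (h₁ : t < 1) (X : ℕ) :
    ‖∑ n ∈ Ioc 0 X, χ.zetaMul n * (t ^ n : ℝ) - ∑ m ∈ Ioc 0 X, χ m * (t ^ m / (1 - t ^ m) : ℝ)‖
      ≤ X * t ^ X / (1 - t) := by
  rw [sum_zetaMul_mul_pow, ← sum_sub_distrib]
  calc _ ≤ ∑ _m ∈ Ioc 0 X, t ^ X / (1 - t) := norm_sum_le_of_le _ fun m hm ↦ by
          rw [← mul_sub, ← Complex.ofReal_sub, norm_mul, Complex.norm_real]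
          exact (mul_le_of_le_one_left (norm_nonneg _) (χ.norm_le_one _)).trans
            (abs_geom_sum_sub_le h₀ h₁ (mem_Ioc.1 hm).1 X)
    _ = X * t ^ X / (1 - t) := by simp [mul_div_assoc]

variable [NeZero d]

theorem norm_sum_lambert_sub_LOne_div_le (hχ : χ ≠ 1) (h₀ : 0 < t) (h₁ : t < 1) (X : ℕ) :
    ‖∑ m ∈ Ioc 0 X, χ m * (t ^ m / (1 - t ^ m) : ℝ) - LOne χ / (1 - t : ℝ)‖
      ≤ d / (X + 1) / (1 - t) + d := by
  have h₁' : 0 < 1 - t := sub_pos.2 h₁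
  have defect : ‖∑ m ∈ Ioc 0 X, lambertDefect t m • χ m‖ ≤ d := by
    refine (norm_sum_Ioc_smul_le (norm_sum_Ioc_dirichletCharacter_le hχ 0)
      (antitoneOn_lambertDefect h₀ h₁) (fun n _ ↦ lambertDefect_nonneg h₀.le h₁ n) X).trans_eq ?_
    rw [lambertDefect_eq]
    simp [div_self h₁'.ne']
  have decompose : ∑ m ∈ Ioc 0 X, χ m * (t ^ m / (1 - t ^ m) : ℝ) - LOne χ / (1 - t : ℝ)
      = (∑ m ∈ Ioc 0 X, χ m / m - LOne χ) / (1 - t : ℝ)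
        - ∑ m ∈ Ioc 0 X, lambertDefect t m • χ m := by
    rw [sub_div, sub_right_comm, sum_div, ← sum_sub_distrib]
    congr 1
    refine sum_congr rfl fun m _ ↦ ?_
    rw [Complex.real_smul, lambertDefect]
    push_cast
    rw [div_div, mul_comm, sub_mul, one_div_mul_eq_div, sub_sub_cancel]
  rw [decompose]
  refine (norm_sub_le _ _).trans (add_le_add ?_ defect)
  rw [norm_div, Complex.norm_real, Real.norm_of_nonneg h₁'.le]
  gcongr
  exact norm_sum_div_sub_LOne_le hχ X

theorem mul_pow_le_norm_LOne_div_add (hχ : χ ≠ 1) (hχ₂ : χ ^ 2 = 1) (h₀ : 0 < t) (h₁ : t < 1)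
    (N : ℕ) : N * t ^ N ^ 2 ≤ ‖LOne χ‖ / (1 - t) + d := by
  have lim : Tendsto (fun X : ℕ ↦ X * t ^ X / (1 - t) + (d / (X + 1) / (1 - t) + d)
      + ‖LOne χ‖ / (1 - t)) atTop (𝓝 (0 / (1 - t) + (0 / (1 - t) + d) + ‖LOne χ‖ / (1 - t))) := by
    have hd : Tendsto (fun X : ℕ ↦ (d : ℝ) / (X + 1)) atTop (𝓝 0) := mod_cast
      (tendsto_const_div_atTop_nhds_zero_nat (d : ℝ)).comp (tendsto_add_atTop_nat 1)
    exact (((tendsto_self_mul_const_pow_of_lt_one h₀.le h₁).div_const _).add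
      ((hd.div_const _).add_const _)).add_const _
  rw [zero_div, zero_add, zero_add, add_comm] at lim
  refine ge_of_tendsto lim (eventually_atTop.2 ⟨N ^ 2, fun X hX ↦ ?_⟩)
  have lower := (mul_pow_le_re_sum_zetaMul_mul_pow hχ₂ h₀.le h₁.le hX).trans (Complex.re_le_norm _)
  have truncation := norm_sum_zetaMul_mul_pow_sub_le (χ := χ) h₀ h₁ X
  have lambert := norm_sum_lambert_sub_LOne_div_le hχ h₀ h₁ X
  have norm_main : ‖LOne χ / (1 - t : ℝ)‖ = ‖LOne χ‖ / (1 - t) := by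
    rw [norm_div, Complex.norm_real, Real.norm_of_nonneg (sub_pos.2 h₁).le]
  linarith [norm_le_insert' (∑ n ∈ Ioc 0 X, χ.zetaMul n * (t ^ n : ℝ))
      (∑ m ∈ Ioc 0 X, χ m * (t ^ m / (1 - t ^ m) : ℝ)),
    norm_le_insert' (∑ m ∈ Ioc 0 X, χ m * (t ^ m / (1 - t ^ m) : ℝ)) (LOne χ / (1 - t : ℝ))]

theorem norm_LOne_ge_of_sq_eq_one (hχ : χ ≠ 1) (hχ₂ : χ ^ 2 = 1) : 1 / (32 * d) ≤ ‖LOne χ‖ := by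
  have hd : (1 : ℝ) ≤ d := mod_cast NeZero.one_le
  set δ : ℝ := 1 / (32 * d ^ 2) with hδ
  have hδ₀ : 0 < δ := by positivity
  have hδ₁ : δ < 1 := (div_lt_one (by positivity)).2 (by nlinarith)
  have bernoulli : 1 / 2 ≤ (1 - δ) ^ (4 * d) ^ 2 := by
    refine le_trans (le_of_eq ?_) (one_add_mul_le_pow (a := -δ) (by linarith) ((4 * d) ^ 2))
    rw [hδ]
    push_cast
    field_simp
    ring
  have key := mul_pow_le_norm_LOne_div_add hχ hχ₂ (sub_pos.2 hδ₁) (sub_lt_self 1 hδ₀) (4 * d)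
  have key' := (mul_le_mul_of_nonneg_left bernoulli (4 * d : ℕ).cast_nonneg).trans key
  rw [sub_sub_cancel, hδ, div_div_eq_mul_div, div_one] at key'
  push_cast at key'
  rw [div_le_iff₀ (by positivity)]
  nlinarith

end Quadratic

theorem exists_nat_log_mem_Icc {x : ℝ} (hx : 0 ≤ x) :
    ∃ N : ℕ, 0 < N ∧ Real.log N ∈ Set.Icc x (x + 1) := by
  have hpos : 0 < ⌈Real.exp x⌉₊ := Nat.ceil_pos.2 (Real.exp_pos x)
  have hpos' : (0 : ℝ) < ⌈Real.exp x⌉₊ := mod_cast hpos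
  refine ⟨_, hpos, (Real.le_log_iff_exp_le hpos').2 (Nat.le_ceil _),
    (Real.log_le_iff_le_exp hpos').2 ?_⟩
  rw [Real.exp_add]
  nlinarith [Nat.ceil_lt_add_one (Real.exp_pos x).le, Real.add_one_le_exp (1 : ℝ),
    Real.one_le_exp hx]

section Character

variable {d : ℕ} {χ : DirichletCharacter ℂ d}

theorem three_four_one_nonneg (χ : DirichletCharacter ℂ d) (N : ℕ) :
    0 ≤ 3 * (∑ n ∈ Ioc 0 N, Λ n / n) + 4 * (vonMangoldtSum χ N).re
      + (vonMangoldtSum (χ ^ 2) N).re := by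
  have re_term : ∀ (z : ℂ) (n : ℕ), (z / n * Λ n).re = z.re * (Λ n / n) := fun z n ↦ by
    rw [div_mul_comm, mul_comm, ← Complex.ofReal_natCast, ← Complex.ofReal_div,
      Complex.re_mul_ofReal]
  simp only [vonMangoldtSum, Complex.re_sum, mul_sum, ← sum_add_distrib, re_term]
  refine sum_nonneg fun n _ ↦ ?_
  rw [MulChar.pow_apply' _ two_ne_zero, ← mul_assoc, ← add_mul, ← add_mul]
  refine mul_nonneg ?_ (by positivity)
  have norm_le : (χ n).re ^ 2 + (χ n).im ^ 2 ≤ 1 := by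
    have := pow_le_one₀ (n := 2) (norm_nonneg (χ n)) (χ.norm_le_one n)
    rwa [Complex.sq_norm, Complex.normSq_apply, ← sq, ← sq] at this
  rw [sq (χ n), Complex.mul_re]
  nlinarith [sq_nonneg ((χ n).re + 1)]

variable [NeZero d]

theorem log_le_re_vonMangoldtSum_sq_add (hχ : χ ≠ 1) {N : ℕ} (hN : 0 < N) :
    Real.log N ≤ (vonMangoldtSum (χ ^ 2) N).re + (18 + 4 * d)
      + 4 * (‖LOne χ‖ * (Real.log N * (1 + Real.log N))) := by
  have near := (Complex.re_le_norm _).trans (norm_vonMangoldtSum_add_log_le hχ hN)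
  rw [Complex.add_re, Complex.ofReal_re] at near
  linarith [three_four_one_nonneg χ N, (abs_le.1 (abs_sum_Ioc_vonMangoldt_div_sub_log_le hN)).2]

/- If `‖L(1, χ)‖ ≤ 1 / (32 d)`, then for `log N` close to `30 d` the error of the approximation of
the sum by `-log N` is at most `log N + d`, so the sum is at most `d`; otherwise it is bounded by
`8 d / ‖L(1, χ)‖ ≤ 256 d ^ 2` for every `N`. -/
theorem exists_re_vonMangoldtSum_add_le (hχ : χ ≠ 1) :
    ∃ N : ℕ, 0 < N ∧ 0 < Real.log N ∧ Real.log N ≤ 301 * d ^ 2 ∧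
      (vonMangoldtSum χ N).re + (18 + 4 * d) ≤ 19 / 20 * Real.log N := by
  have hd : (1 : ℝ) ≤ d := mod_cast NeZero.one_le
  have hdd : (d : ℝ) ≤ d ^ 2 := le_self_pow₀ hd two_ne_zero
  rcases le_or_gt (‖LOne χ‖ * (32 * d)) 1 with hsmall | hlarge
  · obtain ⟨N, hN, hlow, hup⟩ := exists_nat_log_mem_Icc (x := 30 * d) (by positivity)
    have near := (Complex.re_le_norm _).trans (norm_vonMangoldtSum_add_log_le hχ hN)
    rw [Complex.add_re, Complex.ofReal_re] at near
    have hlog : 0 < Real.log N := by linarith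
    have product : ‖LOne χ‖ * (Real.log N * (1 + Real.log N)) ≤ Real.log N := by
      rw [mul_left_comm]
      refine mul_le_of_le_one_right hlog.le (le_trans ?_ hsmall)
      gcongr
      linarith
    exact ⟨N, hN, hlog, by linarith, by linarith⟩
  · obtain ⟨N, hN, hlow, hup⟩ := exists_nat_log_mem_Icc (x := 300 * d ^ 2) (by positivity)
    have hM : ‖vonMangoldtSum χ N‖ ≤ 256 * d ^ 2 :=
      calc ‖vonMangoldtSum χ N‖ ≤ ‖LOne χ‖ * (32 * d) * ‖vonMangoldtSum χ N‖ :=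
            le_mul_of_one_le_left (norm_nonneg _) hlarge.le
        _ = 32 * d * (‖LOne χ‖ * ‖vonMangoldtSum χ N‖) := by ring
        _ ≤ 32 * d * (8 * d) :=
            mul_le_mul_of_nonneg_left (norm_LOne_mul_norm_vonMangoldtSum_le hχ N) (by positivity)
        _ = 256 * d ^ 2 := by ring
    exact ⟨N, hN, by nlinarith, by linarith,
      by linarith [(Complex.re_le_norm _).trans hM]⟩

theorem norm_LOne_ge_of_sq_ne_one (hχ : χ ^ 2 ≠ 1) : 1 / (25000 * d ^ 2) ≤ ‖LOne χ‖ := by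
  have hd : (1 : ℝ) ≤ d ^ 2 := one_le_pow₀ (mod_cast NeZero.one_le)
  have hχ₁ : χ ≠ 1 := fun h ↦ hχ (by rw [h, one_pow])
  obtain ⟨N, hN, hlog, hlog_le, hre⟩ := exists_re_vonMangoldtSum_add_le hχ
  have ineq := log_le_re_vonMangoldtSum_sq_add hχ₁ hN
  have cancel : 1 ≤ 80 * (‖LOne χ‖ * (1 + Real.log N)) := by
    refine le_of_mul_le_mul_left ?_ hlog
    linarith
  rw [div_le_iff₀ (by positivity)]
  nlinarith [mul_le_mul_of_nonneg_left hlog_le (norm_nonneg (LOne χ)), norm_nonneg (LOne χ)]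

theorem norm_LOne_ge (hχ : χ ≠ 1) : 1 / (25000 * d ^ 2) ≤ ‖LOne χ‖ := by
  by_cases h : χ ^ 2 = 1
  · have hd : (1 : ℝ) ≤ d := mod_cast NeZero.one_le
    refine le_trans ?_ (norm_LOne_ge_of_sq_eq_one hχ h)
    gcongr
    · norm_num
    · exact le_self_pow₀ hd two_ne_zero
  · exact norm_LOne_ge_of_sq_ne_one h

theorem norm_vonMangoldtSum_le (hχ : χ ≠ 1) (N : ℕ) :
    ‖vonMangoldtSum χ N‖ ≤ 200000 * d ^ 3 := by
  have hd : (1 : ℝ) ≤ d := mod_cast NeZero.one_le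
  have h := (mul_le_mul_of_nonneg_right (norm_LOne_ge hχ) (norm_nonneg _)).trans
    (norm_LOne_mul_norm_vonMangoldtSum_le hχ N)
  rw [one_div, inv_mul_le_iff₀ (by positivity)] at h
  linarith

end Character

section Mertens

theorem exists_sum_vonMangoldt_div_le_of_not_prime :
    ∃ C : ℝ, 0 ≤ C ∧ ∀ s : Finset ℕ, (∀ n ∈ s, ¬ n.Prime) → ∑ n ∈ s, Λ n / n ≤ C := by
  have hsum := vonMangoldt.summable_residueClass_non_primes_div (0 : ZMod 1)
  have term_nonneg : ∀ n : ℕ,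
      0 ≤ (if n.Prime then 0 else vonMangoldt.residueClass (0 : ZMod 1) n) / n := fun n ↦ by
    have := vonMangoldt.residueClass_nonneg (0 : ZMod 1) n
    split_ifs <;> positivity
  refine ⟨_, tsum_nonneg term_nonneg, fun s hs ↦ le_trans (le_of_eq ?_)
    (hsum.sum_le_tsum s fun n _ ↦ term_nonneg n)⟩
  refine sum_congr rfl fun n hn ↦ ?_
  rw [if_neg (hs n hn), vonMangoldt.residueClass,
    Set.indicator_of_mem (show n ∈ {m : ℕ | (m : ZMod 1) = 0} from Subsingleton.elim _ _)]

theorem exists_sum_vonMangoldt_div_le_of_not_coprime :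
    ∃ C : ℝ, 0 ≤ C ∧ ∀ (d : ℕ) [NeZero d] (s : Finset ℕ), (∀ n ∈ s, ¬ n.Coprime d) →
      ∑ n ∈ s, Λ n / n ≤ C + d := by
  obtain ⟨C, hC, hprimePow⟩ := exists_sum_vonMangoldt_div_le_of_not_prime
  refine ⟨C, hC, fun d _ s hs ↦ ?_⟩
  rw [← sum_filter_not_add_sum_filter s Nat.Prime]
  refine add_le_add (hprimePow _ fun n hn ↦ (mem_filter.1 hn).2) ?_
  calc ∑ p ∈ s with p.Prime, Λ p / p ≤ ∑ p ∈ s with p.Prime, (1 : ℝ) := by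
        refine sum_le_sum fun p hp ↦ ?_
        rw [vonMangoldt_apply_prime (mem_filter.1 hp).2]
        exact div_le_one_of_le₀ (Real.log_le_self p.cast_nonneg) p.cast_nonneg
    _ ≤ (Ioc 0 d).card := by
        rw [sum_const, nsmul_one, Nat.cast_le]
        refine card_le_card fun p hp ↦ ?_
        obtain ⟨hps, hp⟩ := mem_filter.1 hp
        have hpd : p ∣ d := not_not.1 fun h ↦ hs p hps ((hp.coprime_iff_not_dvd).2 h)
        exact mem_Ioc.2 ⟨hp.pos, Nat.le_of_dvd (NeZero.pos d) hpd⟩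
    _ = d := by simp

theorem exists_norm_vonMangoldtSum_one_sub_log_le :
    ∃ C : ℝ, 0 ≤ C ∧ ∀ (d : ℕ) [NeZero d] (N : ℕ), 0 < N →
      ‖vonMangoldtSum (1 : DirichletCharacter ℂ d) N - Real.log N‖ ≤ C * d := by
  obtain ⟨C, hC, hcop⟩ := exists_sum_vonMangoldt_div_le_of_not_coprime
  refine ⟨C + 7, by linarith, fun d _ N hN ↦ ?_⟩
  have hd : (1 : ℝ) ≤ d := mod_cast NeZero.one_le
  have eq : vonMangoldtSum (1 : DirichletCharacter ℂ d) N
      = (∑ n ∈ Ioc 0 N with n.Coprime d, Λ n / n : ℝ) := by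
    rw [vonMangoldtSum, Complex.ofReal_sum, sum_filter]
    refine sum_congr rfl fun n _ ↦ ?_
    split_ifs with hn
    · rw [MulChar.one_apply ((ZMod.isUnit_iff_coprime n d).2 hn)]
      push_cast
      ring
    · rw [MulChar.map_nonunit _ ((ZMod.isUnit_iff_coprime n d).not.2 hn)]
      simp
  have split := sum_filter_add_sum_filter_not (Ioc 0 N) (fun n ↦ n.Coprime d)
    (fun n ↦ Λ n / (n : ℝ))
  have bad := hcop d {n ∈ Ioc 0 N | ¬ n.Coprime d} fun n hn ↦ (mem_filter.1 hn).2
  have bad_nonneg : 0 ≤ ∑ n ∈ Ioc 0 N with ¬ n.Coprime d, Λ n / (n : ℝ) :=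
    sum_nonneg fun n _ ↦ by positivity
  have full := abs_le.1 (abs_sum_Ioc_vonMangoldt_div_sub_log_le hN)
  rw [eq, ← Complex.ofReal_sub, Complex.norm_real, Real.norm_eq_abs, abs_le]
  constructor <;> nlinarith

variable {d : ℕ} [NeZero d] {a : ZMod d}

theorem sum_residueClass_div (ha : IsUnit a) (N : ℕ) :
    ((∑ n ∈ Ioc 0 N, vonMangoldt.residueClass a n / n : ℝ) : ℂ)
      = (d.totient : ℂ)⁻¹ * ∑ χ : DirichletCharacter ℂ d, χ a⁻¹ * vonMangoldtSum χ N := by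
  simp only [vonMangoldtSum, mul_sum]
  rw [sum_comm, Complex.ofReal_sum]
  refine sum_congr rfl fun n _ ↦ ?_
  rw [Complex.ofReal_div, vonMangoldt.residueClass_apply ha, Complex.ofReal_natCast, mul_sum,
    sum_div]
  exact sum_congr rfl fun χ _ ↦ by ring

theorem exists_abs_sum_residueClass_div_sub_le :
    ∃ C : ℝ, 0 ≤ C ∧ ∀ (d : ℕ) [NeZero d] (a : ZMod d), IsUnit a → ∀ N : ℕ, 0 < N →
      |∑ n ∈ Ioc 0 N, vonMangoldt.residueClass a n / n - Real.log N / d.totient| ≤ C * d ^ 3 := by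
  classical
  obtain ⟨C, hC, htrivial⟩ := exists_norm_vonMangoldtSum_one_sub_log_le
  refine ⟨C + 200000, by linarith, fun d _ a ha N hN ↦ ?_⟩
  have hd : (1 : ℝ) ≤ d := mod_cast NeZero.one_le
  have hφ : (0 : ℝ) < d.totient := mod_cast Nat.totient_pos.2 (NeZero.pos d)
  have hda : IsUnit a⁻¹ := by
    obtain ⟨u, rfl⟩ := ha
    exact ZMod.inv_coe_unit u ▸ (u⁻¹).isUnit
  have term : ∀ χ : DirichletCharacter ℂ d,
      ‖χ a⁻¹ * vonMangoldtSum χ N - if χ = 1 then (Real.log N : ℂ) else 0‖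
        ≤ (C + 200000) * d ^ 3 := by
    intro χ
    have hd₃ : (d : ℝ) ≤ d ^ 3 := le_self_pow₀ hd three_ne_zero
    split_ifs with hχ
    · rw [hχ, MulChar.one_apply hda, one_mul]
      nlinarith [htrivial d N hN]
    · rw [sub_zero, norm_mul]
      nlinarith [mul_le_of_le_one_left (norm_nonneg (vonMangoldtSum χ N)) (χ.norm_le_one a⁻¹),
        norm_vonMangoldtSum_le hχ N]
  have expand : ((∑ n ∈ Ioc 0 N, vonMangoldt.residueClass a n / n - Real.log N / d.totient : ℝ) : ℂ)
      = (d.totient : ℂ)⁻¹ * ∑ χ : DirichletCharacter ℂ d,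
        (χ a⁻¹ * vonMangoldtSum χ N - if χ = 1 then (Real.log N : ℂ) else 0) := by
    rw [Complex.ofReal_sub, sum_residueClass_div ha, sum_sub_distrib, sum_ite_eq',
      if_pos (mem_univ _), mul_sub]
    push_cast
    ring
  rw [← Real.norm_eq_abs, ← Complex.norm_real, expand, norm_mul, norm_inv, Complex.norm_natCast,
    inv_mul_le_iff₀ hφ]
  refine (norm_sum_le_of_le _ fun χ _ ↦ term χ).trans_eq ?_
  rw [sum_const, card_univ, nsmul_eq_mul, ← Nat.card_eq_fintype_card,
    DirichletCharacter.card_eq_totient_of_hasEnoughRootsOfUnity]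

theorem exists_abs_sum_log_div_sub_le :
    ∃ C : ℝ, 0 ≤ C ∧ ∀ (d : ℕ) [NeZero d] (a : ZMod d), IsUnit a → ∀ N : ℕ, 0 < N →
      |∑ p ∈ Ioc 0 N with Nat.Prime p ∧ ((p : ℕ) : ZMod d) = a, Real.log p / p
          - Real.log N / d.totient|
        ≤ C * d ^ 3 := by
  obtain ⟨C₁, hC₁, hprimePow⟩ := exists_sum_vonMangoldt_div_le_of_not_prime
  obtain ⟨C₂, hC₂, hall⟩ := exists_abs_sum_residueClass_div_sub_le
  refine ⟨C₁ + C₂, by linarith, fun d _ a ha N hN ↦ ?_⟩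
  have hd : (1 : ℝ) ≤ d ^ 3 := one_le_pow₀ (mod_cast NeZero.one_le)
  have residue : ∑ n ∈ Ioc 0 N, vonMangoldt.residueClass a n / n
      = ∑ n ∈ Ioc 0 N with ((n : ℕ) : ZMod d) = a, Λ n / n := by
    rw [sum_filter]
    refine sum_congr rfl fun n _ ↦ ?_
    simp only [vonMangoldt.residueClass, Set.indicator_apply, Set.mem_ofPred_eq, ite_div, zero_div]
  have primes : ∑ n ∈ Ioc 0 N with ((n : ℕ) : ZMod d) = a ∧ n.Prime, Λ n / n
      = ∑ p ∈ Ioc 0 N with Nat.Prime p ∧ ((p : ℕ) : ZMod d) = a, Real.log p / p := by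
    refine sum_congr (by simp only [and_comm]) fun p hp ↦ ?_
    rw [vonMangoldt_apply_prime (mem_filter.1 hp).2.1]
  have others := hprimePow {n ∈ Ioc 0 N | ((n : ℕ) : ZMod d) = a ∧ ¬ n.Prime}
    fun n hn ↦ (mem_filter.1 hn).2.2
  have others_nonneg : 0 ≤ ∑ n ∈ Ioc 0 N with ((n : ℕ) : ZMod d) = a ∧ ¬ n.Prime, Λ n / (n : ℝ) :=
    sum_nonneg fun n _ ↦ by positivity
  have bound := hall d a ha N hN
  rw [residue, ← sum_filter_add_sum_filter_not _ Nat.Prime, filter_filter, filter_filter,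
    primes] at bound
  rw [abs_le] at bound ⊢
  constructor <;> nlinarith

end Mertens

section Counting

theorem abs_card_filter_modEq_sub_le {m : ℕ} (hm : 0 < m) (r : ℕ) {a b : ℕ} (hab : a ≤ b) :
    |(#{n ∈ Ioc a b | n ≡ r [MOD m]} : ℝ) - (b - a) / m| ≤ 1 := by
  have count := Nat.Ioc_filter_modEq_card a b hm r
  have floor_le : ⌊((a : ℚ) - r) / m⌋ ≤ ⌊((b : ℚ) - r) / m⌋ := by gcongr
  rw [max_eq_left (sub_nonneg.2 floor_le)] at count
  have bound : |(#{n ∈ Ioc a b | n ≡ r [MOD m]} : ℚ) - (b - a) / m| ≤ 1 := by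
    have shift : ((b : ℚ) - a) / m = (b - r) / m - (a - r) / m := by ring
    rw [← Int.cast_natCast, count, shift, Int.cast_sub, abs_le]
    constructor <;>
      linarith [Int.floor_le (((a : ℚ) - r) / m), Int.lt_floor_add_one (((a : ℚ) - r) / m),
        Int.floor_le (((b : ℚ) - r) / m), Int.lt_floor_add_one (((b : ℚ) - r) / m)]
  simpa using (Rat.cast_le (K := ℝ)).2 bound

theorem abs_sum_Ioc_sub_le_of_le_sub {f F : ℕ → ℝ} {y Y : ℕ} (hyY : y ≤ Y)
    (hf : ∀ n, y ≤ n → 0 ≤ f n) (hle : ∀ n, y ≤ n → f (n + 1) ≤ F (n + 1) - F n)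
    (hge : ∀ n, y ≤ n → F (n + 1) - F n ≤ f n) :
    |∑ n ∈ Ioc y Y, f n - (F Y - F y)| ≤ f y := by
  have sandwich : F Y - F y - (f y - f Y) ≤ ∑ n ∈ Ioc y Y, f n
      ∧ ∑ n ∈ Ioc y Y, f n ≤ F Y - F y := by
    induction Y, hyY using Nat.le_induction with
    | base => simp
    | succ n hn ih =>
      rw [sum_Ioc_succ_top hn]
      constructor <;> linarith [ih.1, ih.2, hle n hn, hge n hn]
  rw [abs_le]
  constructor <;> linarith [sandwich.1, sandwich.2, hf y le_rfl, hf Y hyY]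

theorem inv_add_one_le_log_sub {x : ℝ} (hx : 0 < x) :
    (x + 1)⁻¹ ≤ Real.log (x + 1) - Real.log x := by
  rw [← Real.log_div (by positivity) hx.ne']
  refine le_trans (le_of_eq ?_) (Real.one_sub_inv_le_log_of_pos (by positivity))
  field_simp
  ring

theorem log_sub_le_inv {x : ℝ} (hx : 0 < x) : Real.log (x + 1) - Real.log x ≤ x⁻¹ := by
  rw [← Real.log_div (by positivity) hx.ne']
  refine (Real.log_le_sub_one_of_pos (by positivity)).trans (le_of_eq ?_)
  field_simp
  ring

theorem abs_sum_Ioc_inv_sub_le {y Y : ℕ} (hy : 0 < y) (hyY : y ≤ Y) :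
    |∑ n ∈ Ioc y Y, (n : ℝ)⁻¹ - (Real.log Y - Real.log y)| ≤ (y : ℝ)⁻¹ := by
  have hpos : ∀ n, y ≤ n → (0 : ℝ) < n := fun n hn ↦ mod_cast hy.trans_le hn
  refine abs_sum_Ioc_sub_le_of_le_sub (f := fun n ↦ (n : ℝ)⁻¹) (F := fun n ↦ Real.log n) hyY
    (fun n _ ↦ by positivity) (fun n hn ↦ ?_) (fun n hn ↦ ?_) <;> push_cast
  · exact inv_add_one_le_log_sub (hpos n hn)
  · exact log_sub_le_inv (hpos n hn)

theorem abs_sum_filter_modEq_inv_sub_le {m : ℕ} (hm : 0 < m) (r : ℕ) {y Y : ℕ} (hy : 0 < y)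
    (hyY : y ≤ Y) :
    |∑ n ∈ Ioc y Y with n ≡ r [MOD m], (n : ℝ)⁻¹ - (Real.log Y - Real.log y) / m| ≤ 2 / y := by
  have hm' : (1 : ℝ) ≤ m := mod_cast hm
  have partial_le : ∀ k, ‖∑ n ∈ Ioc y k, ((if n ≡ r [MOD m] then 1 else 0) - 1 / (m : ℝ))‖ ≤ 1 := by
    intro k
    rcases le_total k y with hk | hk
    · simp [Ioc_eq_empty_of_le hk]
    rw [sum_sub_distrib, ← sum_filter, sum_const, sum_const, Nat.card_Ioc, nsmul_one, nsmul_eq_mul,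
      Nat.cast_sub hk, mul_one_div]
    exact abs_card_filter_modEq_sub_le hm r hk
  have by_parts := norm_sum_Ioc_smul_le partial_le (f := fun n ↦ (n : ℝ)⁻¹)
    (fun i hi j _ hij ↦ by
      have : 0 < i := (Nat.zero_le y).trans_lt hi
      dsimp only
      gcongr) (fun i _ ↦ by positivity) Y
  have expand : ∑ n ∈ Ioc y Y, (n : ℝ)⁻¹ • ((if n ≡ r [MOD m] then 1 else 0) - 1 / (m : ℝ))
      = ∑ n ∈ Ioc y Y with n ≡ r [MOD m], (n : ℝ)⁻¹ - (∑ n ∈ Ioc y Y, (n : ℝ)⁻¹) / m := by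
    rw [sum_filter, sum_div, ← sum_sub_distrib]
    refine sum_congr rfl fun n _ ↦ ?_
    rw [smul_eq_mul]
    split_ifs <;> ring
  have average : |(∑ n ∈ Ioc y Y, (n : ℝ)⁻¹) / m - (Real.log Y - Real.log y) / m| ≤ (y : ℝ)⁻¹ := by
    rw [← sub_div, abs_div, Nat.abs_cast]
    exact (div_le_self (abs_nonneg _) hm').trans (abs_sum_Ioc_inv_sub_le hy hyY)
  rw [expand, Real.norm_eq_abs, one_mul] at by_parts
  calc _ ≤ ((y + 1 : ℕ) : ℝ)⁻¹ + (y : ℝ)⁻¹ :=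
        (abs_sub_le _ _ _).trans (add_le_add by_parts average)
    _ ≤ (y : ℝ)⁻¹ + (y : ℝ)⁻¹ := by gcongr; exact y.le_succ
    _ = 2 / y := by ring

theorem abs_sum_filter_modEq_dvd_inv_sub_le {d k : ℕ} (hd : 0 < d) (hk : 0 < k)
    (hkd : k.Coprime d) (a : ℕ) {y Y : ℕ} (hy : 0 < y) (hyY : y ≤ Y) :
    |∑ n ∈ Ioc y Y with n ≡ a [MOD d] ∧ k ∣ n, (n : ℝ)⁻¹ - (Real.log Y - Real.log y) / d / k|
      ≤ 2 / y := by
  obtain ⟨c, hcd, hck⟩ := Nat.chineseRemainder hkd.symm a 0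
  have crt : ∀ n, n ≡ a [MOD d] ∧ k ∣ n ↔ n ≡ c [MOD d * k] := fun n ↦ by
    rw [← Nat.modEq_and_modEq_iff_modEq_mul hkd.symm, ← Nat.modEq_zero_iff_dvd]
    exact and_congr ⟨fun h ↦ h.trans hcd.symm, fun h ↦ h.trans hcd⟩
      ⟨fun h ↦ h.trans hck.symm, fun h ↦ h.trans hck⟩
  simpa only [crt, div_div, Nat.cast_mul] using
    abs_sum_filter_modEq_inv_sub_le (Nat.mul_pos hd hk) c hy hyY

end Counting

section SquarefreeSums

theorem sum_le_sum_of_forall_exists {ι κ M : Type*} [AddCommMonoid M] [PartialOrder M]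
    [IsOrderedAddMonoid M] {s : Finset ι} {t : Finset κ} {f : ι → M} {g : κ → M} (e : ι → κ)
    (hf : ∀ i ∈ s, 0 ≤ f i) (h : ∀ k ∈ t, ∃ i ∈ s, e i = k ∧ g k ≤ f i) :
    ∑ k ∈ t, g k ≤ ∑ i ∈ s, f i := by
  classical
  calc ∑ k ∈ t, g k ≤ ∑ k ∈ t, ∑ i ∈ s with e i = k, f i := sum_le_sum fun k hk ↦ by
        obtain ⟨i, hi, hik, hgf⟩ := h k hk
        exact hgf.trans (single_le_sum (fun j hj ↦ hf j (mem_filter.1 hj).1)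
          (mem_filter.2 ⟨hi, hik⟩))
    _ ≤ ∑ i ∈ s, f i := sum_fiberwise_le_sum_of_sum_fiber_nonneg fun _ _ ↦
        sum_nonneg fun j hj ↦ hf j (mem_filter.1 hj).1

theorem sum_divisors_filter_squarefree_eq_sum_powerset {M : Type*} [AddCommMonoid M] {n : ℕ}
    (hn : n ≠ 0) (f : ℕ → M) :
    ∑ l ∈ n.divisors with Squarefree l, f l = ∑ t ∈ n.primeFactors.powerset, f (∏ p ∈ t, p) := by
  rw [Nat.sum_divisors_filter_squarefree hn, Nat.factors_eq]
  exact sum_congr rfl fun t _ ↦ by rw [t.prod_val]; rfl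

theorem totient_prod_of_subset_primeFactors {n : ℕ} {t : Finset ℕ} (ht : t ⊆ n.primeFactors) :
    ((∏ p ∈ t, p).totient : ℝ) = ∏ p ∈ t, ((p : ℝ) - 1) := by
  have prime : ∀ p ∈ t, p.Prime := fun p hp ↦ Nat.prime_of_mem_primeFactors (ht hp)
  induction t using Finset.induction_on with
  | empty => simp
  | insert p t hp ih =>
    rw [insert_subset_iff] at ht
    have coprime : p.Coprime (∏ q ∈ t, q) := Nat.Coprime.prod_right fun q hq ↦
      (Nat.coprime_primes (prime p (mem_insert_self p t)) (prime q (mem_insert_of_mem hq))).2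
        (ne_of_mem_of_not_mem hq hp).symm
    have hp' := prime p (mem_insert_self p t)
    rw [prod_insert hp, prod_insert hp, Nat.totient_mul coprime, Nat.totient_prime hp',
      Nat.cast_mul, Nat.cast_pred hp'.pos, ih ht.2 fun q hq ↦ prime q (mem_insert_of_mem hq)]

theorem totient_eq_mul_prod_one_sub_inv (n : ℕ) :
    (n.totient : ℝ) = n * ∏ p ∈ n.primeFactors, (1 - (p : ℝ)⁻¹) := by
  simpa using congrArg ((↑) : ℚ → ℝ) (Nat.totient_eq_mul_prod_factors n)

theorem sum_divisors_filter_squarefree_inv_totient {n : ℕ} (hn : n ≠ 0) :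
    ∑ l ∈ n.divisors with Squarefree l, (l.totient : ℝ)⁻¹ = n / n.totient := by
  rw [sum_divisors_filter_squarefree_eq_sum_powerset hn, totient_eq_mul_prod_one_sub_inv,
    div_mul_cancel_left₀ (mod_cast hn), ← prod_inv_distrib]
  calc ∑ t ∈ n.primeFactors.powerset, ((∏ p ∈ t, p).totient : ℝ)⁻¹
      = ∑ t ∈ n.primeFactors.powerset, ∏ p ∈ t, ((p : ℝ) - 1)⁻¹ :=
        sum_congr rfl fun t ht ↦ by
          rw [totient_prod_of_subset_primeFactors (mem_powerset.1 ht), prod_inv_distrib]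
    _ = ∏ p ∈ n.primeFactors, (1 + ((p : ℝ) - 1)⁻¹) := (prod_one_add _).symm
    _ = ∏ p ∈ n.primeFactors, (1 - (p : ℝ)⁻¹)⁻¹ := prod_congr rfl fun p hp ↦ by
        have : (1 : ℝ) < p := mod_cast (Nat.prime_of_mem_primeFactors hp).one_lt
        have : (p : ℝ) - 1 ≠ 0 := by linarith
        field_simp
        ring

theorem log_le_two_mul_sum_squarefree_inv (R : ℕ) :
    Real.log R ≤ 2 * ∑ m ∈ Ioc 0 R with Squarefree m, (m : ℝ)⁻¹ := by
  rcases R.eq_zero_or_pos with rfl | hR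
  · simp
  have sum_inv_sq : ∑ b ∈ Ioc 0 R, ((b : ℝ) ^ 2)⁻¹ ≤ 2 := by
    simpa [Ioo_add_one_right_eq_Ioc] using sum_Ioo_inv_sq_le (α := ℝ) 0 (R + 1)
  calc Real.log R ≤ Real.log (R + 1 : ℕ) := by gcongr; exact R.le_succ
    _ ≤ harmonic R := log_add_one_le_harmonic R
    _ = ∑ n ∈ Ioc 0 R, (n : ℝ)⁻¹ := by
      rw [harmonic_eq_sum_Icc, ← Icc_add_one_left_eq_Ioc]
      push_cast
      rfl
    _ ≤ ∑ x ∈ Ioc 0 R ×ˢ {m ∈ Ioc 0 R | Squarefree m}, ((x.1 : ℝ) ^ 2)⁻¹ * (x.2 : ℝ)⁻¹ := by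
      refine sum_le_sum_of_forall_exists (fun x ↦ x.1 ^ 2 * x.2) (fun _ _ ↦ by positivity)
        fun n hn ↦ ?_
      obtain ⟨hn₀, hnR⟩ := mem_Ioc.1 hn
      obtain ⟨m, b, hm, hb, rfl, m_squarefree⟩ := Nat.sq_mul_squarefree_of_pos hn₀
      have b_le : b ≤ b ^ 2 * m :=
        (Nat.le_self_pow two_ne_zero b).trans (Nat.le_mul_of_pos_right _ hm)
      have m_le : m ≤ b ^ 2 * m := Nat.le_mul_of_pos_left _ (pow_pos hb 2)
      refine ⟨(b, m), mem_product.2 ⟨mem_Ioc.2 ⟨hb, b_le.trans hnR⟩,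
        mem_filter.2 ⟨mem_Ioc.2 ⟨hm, m_le.trans hnR⟩, m_squarefree⟩⟩, rfl, ?_⟩
      push_cast
      rw [mul_inv]
    _ = (∑ b ∈ Ioc 0 R, ((b : ℝ) ^ 2)⁻¹) * ∑ m ∈ Ioc 0 R with Squarefree m, (m : ℝ)⁻¹ := by
      rw [sum_mul_sum, sum_product]
    _ ≤ 2 * ∑ m ∈ Ioc 0 R with Squarefree m, (m : ℝ)⁻¹ := by gcongr

theorem sum_squarefree_inv_totient_le {d : ℕ} (hd : d ≠ 0) (R : ℕ) :
    ∑ m ∈ Ioc 0 R with Squarefree m, (m.totient : ℝ)⁻¹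
      ≤ d / d.totient * ∑ m ∈ Ioc 0 R with Squarefree m ∧ m.Coprime d, (m.totient : ℝ)⁻¹ := by
  rw [← sum_divisors_filter_squarefree_inv_totient hd, sum_mul_sum, ← sum_product']
  refine sum_le_sum_of_forall_exists (fun x ↦ x.1 * x.2) (fun _ _ ↦ by positivity) fun m hm ↦ ?_
  simp only [mem_filter, mem_Ioc] at hm
  obtain ⟨⟨hm₀, hmR⟩, m_squarefree⟩ := hm
  have factor : m.gcd d * (m / m.gcd d) = m := Nat.mul_div_cancel' (Nat.gcd_dvd_left m d)
  have coprime : (m.gcd d).Coprime (m / m.gcd d) :=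
    Nat.coprime_of_squarefree_mul (factor.symm ▸ m_squarefree)
  have coprime_d : (m / m.gcd d).Coprime d := Nat.coprime_div_gcd_of_squarefree m_squarefree hd
  refine ⟨(m.gcd d, m / m.gcd d), ?_, factor, ?_⟩
  · simp only [mem_product, mem_filter, Nat.mem_divisors, mem_Ioc]
    exact ⟨⟨⟨Nat.gcd_dvd_right m d, hd⟩, m_squarefree.squarefree_of_dvd (Nat.gcd_dvd_left m d)⟩,
      ⟨Nat.div_pos (Nat.gcd_le_left d hm₀) (Nat.gcd_pos_of_pos_left d hm₀),
        (Nat.div_le_self _ _).trans hmR⟩,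
      m_squarefree.squarefree_of_dvd (Nat.div_dvd_of_dvd (Nat.gcd_dvd_left m d)), coprime_d⟩
  · conv_lhs => rw [← factor, Nat.totient_mul coprime]
    rw [Nat.cast_mul, mul_inv]

theorem totient_mul_log_le {d : ℕ} (hd : 0 < d) (R : ℕ) :
    d.totient / (2 * d) * Real.log R
      ≤ ∑ m ∈ Ioc 0 R with Squarefree m ∧ m.Coprime d, (m.totient : ℝ)⁻¹ := by
  have : (0 : ℝ) < d.totient := mod_cast Nat.totient_pos.2 hd
  have inv_le : ∀ m ∈ {m ∈ Ioc 0 R | Squarefree m}, (m : ℝ)⁻¹ ≤ (m.totient : ℝ)⁻¹ := fun m hm ↦ by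
    have : 0 < m.totient := Nat.totient_pos.2 (mem_Ioc.1 (mem_filter.1 hm).1).1
    gcongr
    exact Nat.totient_le m
  have log_le := (log_le_two_mul_sum_squarefree_inv R).trans
    (mul_le_mul_of_nonneg_left ((sum_le_sum inv_le).trans (sum_squarefree_inv_totient_le hd.ne' R))
      zero_le_two)
  calc (d.totient : ℝ) / (2 * d) * Real.log R
      ≤ _ := mul_le_mul_of_nonneg_left log_le (by positivity)
    _ = _ := by field_simp

end SquarefreeSums

section SelbergSieve

theorem sum_divisors_filter_dvd_moebius_div {l m : ℕ} (hl : l ≠ 0) (hm : m ≠ 0) :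
    ∑ d ∈ m.divisors with l ∣ d, μ (m / d) = if m = l then 1 else 0 := by
  by_cases hlm : l ∣ m
  · obtain ⟨k, rfl⟩ := hlm
    have hk : k ≠ 0 := right_ne_zero_of_mul hm
    have divisors_eq : {d ∈ (l * k).divisors | l ∣ d} = k.divisors.image (l * ·) := by
      ext d
      simp only [mem_filter, Nat.mem_divisors, mem_image]
      constructor
      · rintro ⟨⟨hd, -⟩, t, rfl⟩
        exact ⟨t, ⟨Nat.dvd_of_mul_dvd_mul_left (Nat.pos_of_ne_zero hl) hd, hk⟩, rfl⟩
      · rintro ⟨t, ⟨ht, -⟩, rfl⟩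
        exact ⟨⟨mul_dvd_mul_left l ht, hm⟩, dvd_mul_right l t⟩
    rw [divisors_eq, sum_image fun _ _ _ _ ↦ Nat.eq_of_mul_eq_mul_left (Nat.pos_of_ne_zero hl)]
    simp_rw [Nat.mul_div_mul_left _ _ (Nat.pos_of_ne_zero hl)]
    rw [Nat.sum_div_divisors, sum_divisors_moebius]
    simp [hl]
  · rw [if_neg (by rintro rfl; exact hlm dvd_rfl)]
    refine sum_eq_zero fun d hd ↦ absurd ?_ hlm
    obtain ⟨hdm, hld⟩ := mem_filter.1 hd
    exact hld.trans (Nat.dvd_of_mem_divisors hdm)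

variable (s : SelbergSieve)

/-- The divisors of the product of the sifting primes up to the level of the sieve: the support of
Selberg's weights. -/
noncomputable def selbergSupport : Finset ℕ := {l ∈ s.prodPrimes.divisors | ((l : ℕ) : ℝ) ≤ s.level}

/-- The quantity `∑ g(l)` by which Selberg's upper bound sieve divides the total mass. -/
noncomputable def selbergSum : ℝ := ∑ l ∈ selbergSupport s, s.selbergTerms l

/-- Selberg's weights, for use in `BoundingSieve.lambdaSquared`. They are normalised to take the
value `1` at `1` and chosen by Möbius inversion over multiples so that the diagonalised quadratic
form of the sieve has the entries `μ(l) g(l) / selbergSum` at `l ≤ level` and `0` elsewhere, which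
minimises it. -/
noncomputable def selbergWeight (d : ℕ) : ℝ :=
  (s.nu d)⁻¹ * (∑ m ∈ selbergSupport s with d ∣ m, μ (m / d) * (μ m * s.selbergTerms m))
    / selbergSum s

variable {s}

theorem mem_selbergSupport {l : ℕ} :
    l ∈ selbergSupport s ↔ l ∣ s.prodPrimes ∧ (l : ℝ) ≤ s.level := by
  simp [selbergSupport, BoundingSieve.prodPrimes_ne_zero]

theorem selbergSupport_subset_divisors : selbergSupport s ⊆ s.prodPrimes.divisors :=
  filter_subset _ _

theorem squarefree_of_mem_selbergSupport {l : ℕ} (hl : l ∈ selbergSupport s) : Squarefree l :=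
  BoundingSieve.squarefree_of_dvd_prodPrimes (mem_selbergSupport.1 hl).1

theorem selbergTerms_pos_of_mem_selbergSupport {l : ℕ} (hl : l ∈ selbergSupport s) :
    0 < s.selbergTerms l :=
  BoundingSieve.selbergTerms_pos (mem_selbergSupport.1 hl).1

theorem sq_moebius_mul_selbergTerms {l : ℕ} (hl : l ∈ selbergSupport s) :
    (μ l : ℝ) * (μ l * s.selbergTerms l) = s.selbergTerms l := by
  have : (μ l : ℝ) ^ 2 = 1 := mod_cast
    moebius_sq_eq_one_of_squarefree (squarefree_of_mem_selbergSupport hl)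
  linear_combination s.selbergTerms l * this

theorem selbergSum_pos : 0 < selbergSum s :=
  sum_pos (fun _ ↦ selbergTerms_pos_of_mem_selbergSupport)
    ⟨1, mem_selbergSupport.2 ⟨one_dvd _, by simpa using s.one_le_level⟩⟩

theorem selbergWeight_one : selbergWeight s 1 = 1 := by
  rw [selbergWeight, s.nu_mult.map_one, inv_one, one_mul, filter_true_of_mem fun m _ ↦ one_dvd m,
    div_eq_one_iff_eq selbergSum_pos.ne', selbergSum]
  exact sum_congr rfl fun m hm ↦ by rw [Nat.div_one, sq_moebius_mul_selbergTerms hm]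

theorem selbergWeight_eq_zero_of_level_lt {d : ℕ} (hd : s.level < d) : selbergWeight s d = 0 := by
  rw [selbergWeight, filter_false_of_mem fun m hm hdm ↦ ?_, sum_empty, mul_zero, zero_div]
  have m_pos : 0 < m := (squarefree_of_mem_selbergSupport hm).ne_zero.bot_lt
  have d_le : (d : ℝ) ≤ m := mod_cast Nat.le_of_dvd m_pos hdm
  linarith [(mem_selbergSupport.1 hm).2]

theorem sum_nu_mul_selbergWeight {l : ℕ} (hl : l ≠ 0) :
    ∑ d ∈ s.prodPrimes.divisors with l ∣ d, s.nu d * selbergWeight s d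
      = if l ∈ selbergSupport s then μ l * s.selbergTerms l / selbergSum s else 0 := by
  calc ∑ d ∈ s.prodPrimes.divisors with l ∣ d, s.nu d * selbergWeight s d
      = ∑ d ∈ s.prodPrimes.divisors with l ∣ d, ∑ m ∈ selbergSupport s with d ∣ m,
          μ (m / d) * (μ m * s.selbergTerms m / selbergSum s) := sum_congr rfl fun d hd ↦ by
        have nu_ne : s.nu d ≠ 0 :=
          BoundingSieve.nu_ne_zero (Nat.dvd_of_mem_divisors (mem_filter.1 hd).1)
        rw [selbergWeight, mul_div_assoc, mul_inv_cancel_left₀ nu_ne, sum_div]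
        exact sum_congr rfl fun m _ ↦ by ring
    _ = ∑ m ∈ selbergSupport s, ∑ d ∈ m.divisors with l ∣ d,
          μ (m / d) * (μ m * s.selbergTerms m / selbergSum s) := by
        refine sum_comm' fun d m ↦ ?_
        simp only [mem_filter, Nat.mem_divisors]
        constructor
        · rintro ⟨⟨-, hld⟩, hm, hdm⟩
          exact ⟨⟨⟨hdm, (squarefree_of_mem_selbergSupport hm).ne_zero⟩, hld⟩, hm⟩
        · rintro ⟨⟨⟨hdm, -⟩, hld⟩, hm⟩
          exact ⟨⟨⟨hdm.trans (mem_selbergSupport.1 hm).1, BoundingSieve.prodPrimes_ne_zero⟩, hld⟩,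
            hm, hdm⟩
    _ = ∑ m ∈ selbergSupport s,
          if m = l then μ l * s.selbergTerms l / selbergSum s else 0 := sum_congr rfl fun m hm ↦ by
        have m_ne : m ≠ 0 := (squarefree_of_mem_selbergSupport hm).ne_zero
        rw [← sum_mul, ← Int.cast_sum, sum_divisors_filter_dvd_moebius_div hl m_ne]
        split_ifs with h <;> simp [h]
    _ = _ := sum_ite_eq' _ _ _

theorem mainSum_lambdaSquared_selbergWeight :
    s.mainSum (BoundingSieve.lambdaSquared (selbergWeight s)) = (selbergSum s)⁻¹ := by
  have term_eq : ∀ l ∈ s.prodPrimes.divisors,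
      (s.selbergTerms l)⁻¹ *
          (∑ d ∈ s.prodPrimes.divisors with l ∣ d, s.nu d * selbergWeight s d) ^ 2
        = if l ∈ selbergSupport s then s.selbergTerms l / selbergSum s ^ 2 else 0 := fun l hl ↦ by
    rw [sum_nu_mul_selbergWeight (Nat.pos_of_mem_divisors hl).ne']
    split_ifs with h
    · have g_ne := (selbergTerms_pos_of_mem_selbergSupport h).ne'
      calc (s.selbergTerms l)⁻¹ * (μ l * s.selbergTerms l / selbergSum s) ^ 2
          = (s.selbergTerms l)⁻¹ * (s.selbergTerms l * (μ l * (μ l * s.selbergTerms l)))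
              / selbergSum s ^ 2 := by ring
        _ = s.selbergTerms l / selbergSum s ^ 2 := by
          rw [sq_moebius_mul_selbergTerms h, inv_mul_cancel_left₀ g_ne]
    · simp
  rw [BoundingSieve.mainSum_lambdaSquared_eq_sum_mul_sum_sq]
  simp_rw [← sum_filter]
  rw [sum_congr rfl term_eq, ← sum_filter, filter_mem_eq_inter,
    inter_eq_right.2 selbergSupport_subset_divisors, ← sum_div, ← selbergSum, sq,
    div_mul_cancel_left₀ selbergSum_pos.ne']

theorem inv_nu_mul_sum_selbergTerms_le {d : ℕ} (hd : d ∣ s.prodPrimes) :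
    (s.nu d)⁻¹ * ∑ m ∈ selbergSupport s with d ∣ m, s.selbergTerms m ≤ selbergSum s := by
  have g_mult := s.selbergTerms_isMultiplicative
  have d_ne : d ≠ 0 := ne_zero_of_dvd_ne_zero BoundingSieve.prodPrimes_ne_zero hd
  have coprime : ∀ m ∈ selbergSupport s, d ∣ m → d.Coprime (m / d) := fun m hm hdm ↦
    Nat.coprime_of_squarefree_mul <|
      (Nat.mul_div_cancel' hdm).symm ▸ squarefree_of_mem_selbergSupport hm
  have sum_g : ∑ l ∈ d.divisors, s.selbergTerms l = s.selbergTerms d * (s.nu d)⁻¹ := by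
    rw [← BoundingSieve.sum_divisors_selbergTerms_eq_selbergTerms_mul_nu_inv hd, ← sum_filter,
      Nat.divisors_filter_dvd_of_dvd BoundingSieve.prodPrimes_ne_zero hd]
  calc (s.nu d)⁻¹ * ∑ m ∈ selbergSupport s with d ∣ m, s.selbergTerms m
      = ∑ m ∈ selbergSupport s with d ∣ m, ∑ l ∈ d.divisors,
          s.selbergTerms l * s.selbergTerms (m / d) := by
        rw [mul_sum]
        refine sum_congr rfl fun m hm ↦ ?_
        obtain ⟨hm, hdm⟩ := mem_filter.1 hm
        rw [← sum_mul, sum_g]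
        conv_lhs => rw [← Nat.mul_div_cancel' hdm,
          g_mult.map_mul_of_coprime (coprime m hm hdm)]
        ring
    _ ≤ selbergSum s := by
        rw [← sum_product']
        refine sum_le_sum_of_forall_exists (fun n ↦ (d * (n / n.gcd d), n.gcd d))
          (fun _ hn ↦ (selbergTerms_pos_of_mem_selbergSupport hn).le) fun ⟨m, l⟩ hml ↦ ?_
        simp only [mem_product, mem_filter, Nat.mem_divisors] at hml
        obtain ⟨⟨hm, hdm⟩, hld, -⟩ := hml
        have hdc := coprime m hm hdm
        have gcd_eq : (l * (m / d)).gcd d = l := by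
          rw [Nat.Coprime.gcd_mul_right_cancel l hdc.symm, Nat.gcd_eq_left hld]
        have n_dvd : l * (m / d) ∣ m :=
          (mul_dvd_mul_right hld _).trans (Nat.mul_div_cancel' hdm).dvd
        have m_ne := (squarefree_of_mem_selbergSupport hm).ne_zero
        refine ⟨l * (m / d), mem_selbergSupport.2 ⟨n_dvd.trans (mem_selbergSupport.1 hm).1, ?_⟩,
          ?_, (g_mult.map_mul_of_coprime (hdc.coprime_dvd_left hld)).ge⟩
        · exact le_trans (mod_cast Nat.le_of_dvd m_ne.bot_lt n_dvd) (mem_selbergSupport.1 hm).2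
        · have l_pos : 0 < l := Nat.pos_of_dvd_of_pos hld d_ne.bot_lt
          rw [gcd_eq, Nat.mul_div_cancel_left _ l_pos, Nat.mul_div_cancel' hdm]

theorem abs_selbergWeight_le_one {d : ℕ} (hd : d ∣ s.prodPrimes) : |selbergWeight s d| ≤ 1 := by
  have nu_pos : 0 < s.nu d := BoundingSieve.nu_pos_of_dvd_prodPrimes hd
  have abs_moebius_cast_le (n : ℕ) : |(μ n : ℝ)| ≤ 1 := mod_cast abs_moebius_le_one
  rw [selbergWeight, abs_div, abs_of_pos selbergSum_pos, div_le_one selbergSum_pos, abs_mul,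
    abs_of_pos (inv_pos.2 nu_pos)]
  refine le_trans ?_ (inv_nu_mul_sum_selbergTerms_le hd)
  gcongr
  refine (abs_sum_le_sum_abs _ _).trans (sum_le_sum fun m hm ↦ ?_)
  rw [abs_mul, abs_mul, abs_of_pos (selbergTerms_pos_of_mem_selbergSupport (mem_filter.1 hm).1)]
  have g_pos := selbergTerms_pos_of_mem_selbergSupport (mem_filter.1 hm).1
  calc |(μ (m / d) : ℝ)| * (|(μ m : ℝ)| * s.selbergTerms m)
      ≤ 1 * (1 * s.selbergTerms m) := by gcongr <;> exact abs_moebius_cast_le _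
    _ = s.selbergTerms m := by ring

theorem sum_abs_selbergWeight_le : ∑ d ∈ s.prodPrimes.divisors, |selbergWeight s d| ≤ s.level := by
  calc ∑ d ∈ s.prodPrimes.divisors, |selbergWeight s d|
      = ∑ d ∈ selbergSupport s, |selbergWeight s d| := by
        refine (sum_filter_of_ne fun d _ hd ↦ ?_).symm
        contrapose! hd
        rw [selbergWeight_eq_zero_of_level_lt hd, abs_zero]
    _ ≤ ∑ d ∈ selbergSupport s, 1 :=
        sum_le_sum fun d hd ↦ abs_selbergWeight_le_one (mem_selbergSupport.1 hd).1
    _ ≤ ∑ d ∈ Ioc 0 ⌊s.level⌋₊, 1 := by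
        refine sum_le_sum_of_subset_of_nonneg (fun d hd ↦ mem_Ioc.2 ⟨?_, Nat.le_floor ?_⟩)
          fun _ _ _ ↦ zero_le_one
        · exact (squarefree_of_mem_selbergSupport hd).ne_zero.bot_lt
        · exact (mem_selbergSupport.1 hd).2
    _ = ⌊s.level⌋₊ := by simp
    _ ≤ s.level := Nat.floor_le (zero_le_one.trans s.one_le_level)

theorem errSum_lambdaSquared_le {s : BoundingSieve} (w : ℕ → ℝ) {E : ℝ}
    (hE : ∀ d, d ∣ s.prodPrimes → |s.rem d| ≤ E) :
    s.errSum (BoundingSieve.lambdaSquared w) ≤ E * (∑ d ∈ s.prodPrimes.divisors, |w d|) ^ 2 := by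
  have abs_lambda_le : ∀ d ∈ s.prodPrimes.divisors, |BoundingSieve.lambdaSquared w d|
      ≤ ∑ a ∈ s.prodPrimes.divisors, ∑ b ∈ s.prodPrimes.divisors,
          if d = a.lcm b then |w a| * |w b| else 0 := fun d hd ↦ by
    have divisors_subset : d.divisors ⊆ s.prodPrimes.divisors :=
      Nat.divisors_subset_of_dvd BoundingSieve.prodPrimes_ne_zero (Nat.dvd_of_mem_divisors hd)
    have nonneg : ∀ a b, 0 ≤ if d = a.lcm b then |w a| * |w b| else 0 := fun a b ↦ by positivity
    calc |BoundingSieve.lambdaSquared w d|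
        ≤ ∑ a ∈ d.divisors, ∑ b ∈ d.divisors, if d = a.lcm b then |w a| * |w b| else 0 := by
          refine (abs_sum_le_sum_abs _ _).trans (sum_le_sum fun a _ ↦
            (abs_sum_le_sum_abs _ _).trans (sum_le_sum fun b _ ↦ ?_))
          split_ifs <;> simp [abs_mul]
      _ ≤ _ := (sum_le_sum fun a _ ↦ sum_le_sum_of_subset_of_nonneg divisors_subset
            fun b _ _ ↦ nonneg a b).trans
          (sum_le_sum_of_subset_of_nonneg divisors_subset fun a _ _ ↦
            sum_nonneg fun b _ ↦ nonneg a b)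
  calc s.errSum (BoundingSieve.lambdaSquared w)
      ≤ ∑ d ∈ s.prodPrimes.divisors, (∑ a ∈ s.prodPrimes.divisors, ∑ b ∈ s.prodPrimes.divisors,
          if d = a.lcm b then |w a| * |w b| else 0) * E := sum_le_sum fun d hd ↦
        mul_le_mul (abs_lambda_le d hd) (hE d (Nat.dvd_of_mem_divisors hd)) (abs_nonneg _)
          ((abs_nonneg _).trans (abs_lambda_le d hd))
    _ = E * ∑ a ∈ s.prodPrimes.divisors, ∑ b ∈ s.prodPrimes.divisors, |w a| * |w b| := by
        rw [← sum_mul, mul_comm, sum_comm]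
        congr 1
        refine sum_congr rfl fun a ha ↦ ?_
        rw [sum_comm]
        refine sum_congr rfl fun b hb ↦ ?_
        rw [sum_ite_eq', if_pos (Nat.mem_divisors.2 ⟨Nat.lcm_dvd (Nat.dvd_of_mem_divisors ha)
          (Nat.dvd_of_mem_divisors hb), BoundingSieve.prodPrimes_ne_zero⟩)]
    _ = E * (∑ d ∈ s.prodPrimes.divisors, |w d|) ^ 2 := by rw [sq, sum_mul_sum]

theorem siftedSum_le_totalMass_div_selbergSum_add {E : ℝ}
    (hE : ∀ d, d ∣ s.prodPrimes → |s.rem d| ≤ E) :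
    s.siftedSum ≤ s.totalMass / selbergSum s + E * s.level ^ 2 := by
  have : 0 ≤ E := (abs_nonneg _).trans (hE 1 (one_dvd _))
  have err_le : s.errSum (BoundingSieve.lambdaSquared (selbergWeight s)) ≤ E * s.level ^ 2 := by
    refine (errSum_lambdaSquared_le _ hE).trans ?_
    gcongr
    exact sum_abs_selbergWeight_le
  calc s.siftedSum ≤ _ := BoundingSieve.siftedSum_le_mainSum_errSum_of_upperMoebius _
        (BoundingSieve.upperMoebius_lambdaSquared _ selbergWeight_one)
    _ ≤ _ := by
      rw [mainSum_lambdaSquared_selbergWeight, ← div_eq_mul_inv]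
      gcongr

end SelbergSieve

section ProgressionSieve

/-- The Selberg sieve, of level `z`, for the integers `n ≡ a [MOD d]` in `(y, Y]` with weight `1/n`.
The sifting primes are those up to `z` that do not divide `d`, since only for divisors `k` coprime
to `d` is the proportion of multiples of `k` in the progression equal to `1/k`. -/
noncomputable def progressionSieve (d a y Y : ℕ) {z : ℕ} (hz : 1 ≤ z) : SelbergSieve where
  support := {n ∈ Ioc y Y | n ≡ a [MOD d]}
  prodPrimes := ∏ p ∈ Ioc 0 z with p.Prime ∧ ¬ p ∣ d, p
  prodPrimes_squarefree := by
    refine squarefree_prod_of_pairwise_isCoprime (fun p hp q hq hpq ↦ ?_) fun p hp ↦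
      (mem_filter.1 hp).2.1.squarefree
    exact Nat.coprime_iff_isRelPrime.1
      ((Nat.coprime_primes (mem_filter.1 hp).2.1 (mem_filter.1 hq).2.1).2 hpq)
  weights n := (n : ℝ)⁻¹
  weights_nonneg n := by positivity
  totalMass := (Real.log Y - Real.log y) / d
  nu := ⟨fun n ↦ (n : ℝ)⁻¹, by simp⟩
  nu_mult := ⟨by simp, by simp [mul_comm]⟩
  nu_pos_of_prime p hp _ := by simpa using hp.pos
  nu_lt_one_of_prime p hp _ := inv_lt_one_of_one_lt₀ (mod_cast hp.one_lt)
  level := z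
  one_le_level := mod_cast hz

variable {d a y Y z : ℕ} {hz : 1 ≤ z}

theorem prodPrimes_progressionSieve : (progressionSieve d a y Y hz).prodPrimes
    = ∏ p ∈ Ioc 0 z with p.Prime ∧ ¬ p ∣ d, p := rfl

theorem totalMass_progressionSieve :
    (progressionSieve d a y Y hz).totalMass = (Real.log Y - Real.log y) / d := rfl

theorem coprime_of_dvd_prodPrimes_progressionSieve {k : ℕ}
    (hk : k ∣ (progressionSieve d a y Y hz).prodPrimes) : k.Coprime d := by
  rw [prodPrimes_progressionSieve] at hk
  refine Nat.Coprime.coprime_dvd_left hk (Nat.Coprime.prod_left fun p hp ↦ ?_)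
  obtain ⟨-, p_prime, hpd⟩ := mem_filter.1 hp
  exact (p_prime.coprime_iff_not_dvd).2 hpd

theorem dvd_prodPrimes_progressionSieve {m : ℕ} (m_squarefree : Squarefree m) (hmz : m ≤ z)
    (hmd : m.Coprime d) : m ∣ (progressionSieve d a y Y hz).prodPrimes := by
  rw [prodPrimes_progressionSieve, ← Nat.prod_primeFactors_of_squarefree m_squarefree]
  refine prod_dvd_prod_of_subset _ _ _ fun p hp ↦ ?_
  have p_prime := Nat.prime_of_mem_primeFactors hp
  have p_dvd := Nat.dvd_of_mem_primeFactors hp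
  exact mem_filter.2 ⟨mem_Ioc.2 ⟨p_prime.pos, (Nat.le_of_mem_primeFactors hp).trans hmz⟩, p_prime,
    fun hpd ↦ p_prime.not_dvd_one (hmd ▸ Nat.dvd_gcd p_dvd hpd)⟩

theorem abs_rem_progressionSieve_le (hd : 0 < d) (hy : 0 < y) (hyY : y ≤ Y) {k : ℕ}
    (hk : k ∣ (progressionSieve d a y Y hz).prodPrimes) :
    |(progressionSieve d a y Y hz).rem k| ≤ 2 / y := by
  have k_pos : 0 < k := Nat.pos_of_ne_zero
    (ne_zero_of_dvd_ne_zero BoundingSieve.prodPrimes_ne_zero hk)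
  have bound := abs_sum_filter_modEq_dvd_inv_sub_le hd k_pos
    (coprime_of_dvd_prodPrimes_progressionSieve hk) a hy hyY
  rw [← filter_filter, sum_filter, div_eq_inv_mul _ (k : ℝ)] at bound
  exact bound

theorem selbergTerms_progressionSieve (m : ℕ) :
    (progressionSieve d a y Y hz).selbergTerms m = (m.totient : ℝ)⁻¹ := by
  rw [BoundingSieve.selbergTerms_apply, totient_eq_mul_prod_one_sub_inv, mul_inv, prod_inv_distrib]
  rfl

theorem totient_mul_log_le_selbergSum (hd : 0 < d) :
    d.totient / (2 * d) * Real.log z ≤ selbergSum (progressionSieve d a y Y hz) := by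
  refine (totient_mul_log_le hd z).trans ?_
  rw [selbergSum]
  simp_rw [selbergTerms_progressionSieve]
  refine sum_le_sum_of_subset_of_nonneg (fun m hm ↦ ?_) fun _ _ _ ↦ by positivity
  obtain ⟨hm, m_squarefree, hmd⟩ := mem_filter.1 hm
  have hmz := (mem_Ioc.1 hm).2
  exact mem_selbergSupport.2
    ⟨dvd_prodPrimes_progressionSieve m_squarefree hmz hmd, Nat.cast_le.2 hmz⟩

theorem sum_primes_modEq_inv_le_siftedSum (hzy : z ≤ y) :
    ∑ p ∈ Ioc y Y with p.Prime ∧ p ≡ a [MOD d], (p : ℝ)⁻¹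
      ≤ (progressionSieve d a y Y hz).siftedSum := by
  rw [BoundingSieve.siftedSum, ← sum_filter]
  refine sum_le_sum_of_subset_of_nonneg (fun p hp ↦ ?_) fun n _ _ ↦
    (progressionSieve d a y Y hz).weights_nonneg n
  obtain ⟨hp, p_prime, hpa⟩ := mem_filter.1 hp
  refine mem_filter.2 ⟨mem_filter.2 ⟨hp, hpa⟩, ?_⟩
  rw [prodPrimes_progressionSieve]
  refine Nat.Coprime.prod_left fun q hq ↦ ?_
  obtain ⟨hq, q_prime, -⟩ := mem_filter.1 hq
  have q_lt : q < p := ((mem_Ioc.1 hq).2.trans hzy).trans_lt (mem_Ioc.1 hp).1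
  exact (Nat.coprime_primes q_prime p_prime).2 q_lt.ne

theorem sum_primes_modEq_inv_le (hd : 0 < d) (hdz : d ≤ z) (hz : 2 ≤ z) (a : ℕ) :
    ∑ p ∈ Ioc (z ^ 3) (z ^ 6) with p.Prime ∧ p ≡ a [MOD d], (p : ℝ)⁻¹ ≤ 8 / d.totient := by
  have hz' : 1 ≤ z := by lia
  have : (0 : ℝ) < d.totient := mod_cast Nat.totient_pos.2 hd
  have log_pos : 0 < Real.log z := Real.log_pos (mod_cast hz)
  have le_cube : z ≤ z ^ 3 := Nat.le_self_pow three_ne_zero z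
  have sieve := siftedSum_le_totalMass_div_selbergSum_add fun k hk ↦
    abs_rem_progressionSieve_le (a := a) (Y := z ^ 6) (hz := hz') hd (pow_pos hz' 3)
      (Nat.pow_le_pow_right hz' (by norm_num)) hk
  refine (sum_primes_modEq_inv_le_siftedSum (hz := hz') le_cube).trans (sieve.trans ?_)
  have mass : (progressionSieve d a (z ^ 3) (z ^ 6) hz').totalMass = 3 * Real.log z / d := by
    rw [totalMass_progressionSieve]
    push_cast
    rw [Real.log_pow, Real.log_pow]
    push_cast
    ring
  have main_le : 3 * Real.log z / d / selbergSum (progressionSieve d a (z ^ 3) (z ^ 6) hz')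
      ≤ 6 / d.totient := by
    calc _ ≤ 3 * Real.log z / d / (d.totient / (2 * d) * Real.log z) := by
          gcongr
          exact totient_mul_log_le_selbergSum hd
      _ = 6 / d.totient := by
        field_simp
        norm_num
  have err_le : 2 / ((z ^ 3 : ℕ) : ℝ) * (z : ℝ) ^ 2 ≤ 2 / d.totient := by
    have totient_le : (d.totient : ℝ) ≤ z := mod_cast (Nat.totient_le d).trans hdz
    calc 2 / ((z ^ 3 : ℕ) : ℝ) * (z : ℝ) ^ 2 = 2 / z := by
          push_cast
          field_simp
      _ ≤ 2 / d.totient := by gcongr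
  rw [mass]
  refine (add_le_add main_le err_le).trans (le_of_eq ?_)
  ring

end ProgressionSieve

section PrimeReciprocals

/-- The iterated logarithm `log log x`, the main term in Mertens' theorem. -/
noncomputable def logLog (x : ℝ) : ℝ := Real.log (Real.log x)

theorem logLog_le_logLog {x y : ℝ} (hx : 1 < x) (hxy : x ≤ y) : logLog x ≤ logLog y :=
  Real.log_le_log (Real.log_pos hx) (Real.log_le_log (by linarith) hxy)

theorem one_le_log_of_three_le {x : ℝ} (hx : 3 ≤ x) : 1 ≤ Real.log x := by
  rw [Real.le_log_iff_exp_le (by linarith)]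
  linarith [Real.exp_one_lt_d9]

theorem logLog_nonneg {x : ℝ} (hx : 3 ≤ x) : 0 ≤ logLog x :=
  Real.log_nonneg (one_le_log_of_three_le hx)

theorem abs_sum_Ioc_inv_mul_inv_log_sub_le {y N : ℕ} (hy : 2 ≤ y) (hyN : y ≤ N) :
    |∑ n ∈ Ioc y N, (n : ℝ)⁻¹ * (Real.log n)⁻¹ - (logLog N - logLog y)| ≤ (Real.log y)⁻¹ := by
  have one_lt : ∀ n, y ≤ n → (1 : ℝ) < n := fun n hn ↦ mod_cast (by lia : 1 < n)
  have log_pos : ∀ n, y ≤ n → 0 < Real.log n := fun n hn ↦ Real.log_pos (one_lt n hn)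
  have ratio : ∀ n, y ≤ n → logLog (n + 1 : ℕ) - logLog n
      = Real.log (Real.log (n + 1 : ℕ) / Real.log n) := fun n hn ↦
    (Real.log_div (log_pos _ (by lia)).ne' (log_pos n hn).ne').symm
  have bound := abs_sum_Ioc_sub_le_of_le_sub (f := fun n ↦ (n : ℝ)⁻¹ * (Real.log n)⁻¹)
    (F := fun n ↦ logLog n) hyN (fun n _ ↦ by positivity) (fun n hn ↦ ?_) (fun n hn ↦ ?_)
  · refine bound.trans (mul_le_of_le_one_left (inv_nonneg.2 (log_pos y le_rfl).le) ?_)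
    exact inv_le_one_of_one_le₀ (one_lt y le_rfl).le
  · have log_pos := log_pos n hn
    have log_pos' : 0 < Real.log (n + 1 : ℕ) := Real.log_pos (one_lt _ (by lia))
    rw [ratio n hn]
    calc ((n + 1 : ℕ) : ℝ)⁻¹ * (Real.log (n + 1 : ℕ))⁻¹
        ≤ (Real.log (n + 1 : ℕ) - Real.log n) * (Real.log (n + 1 : ℕ))⁻¹ := by
          gcongr
          push_cast
          exact inv_add_one_le_log_sub (by linarith [one_lt n hn])
      _ = 1 - (Real.log (n + 1 : ℕ) / Real.log n)⁻¹ := by field_simp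
      _ ≤ _ := Real.one_sub_inv_le_log_of_pos (by positivity)
  · have log_pos := log_pos n hn
    have log_pos' : 0 < Real.log (n + 1 : ℕ) := Real.log_pos (one_lt _ (by lia))
    rw [ratio n hn]
    calc _ ≤ Real.log (n + 1 : ℕ) / Real.log n - 1 := Real.log_le_sub_one_of_pos (by positivity)
      _ = (Real.log (n + 1 : ℕ) - Real.log n) * (Real.log n)⁻¹ := by field_simp
      _ ≤ (n : ℝ)⁻¹ * (Real.log n)⁻¹ := by
          gcongr
          push_cast
          exact log_sub_le_inv (by linarith [one_lt n hn])

/-- The sum of `1/p` over the primes `p ≡ b [MOD d]` in `(u, v]`. -/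
noncomputable def primeInvSum (d b u v : ℕ) : ℝ :=
  ∑ p ∈ Ioc u v with p.Prime ∧ p ≡ b [MOD d], (p : ℝ)⁻¹

variable {d u v u' v' w : ℕ}

theorem primeInvSum_nonneg (d b u v : ℕ) : 0 ≤ primeInvSum d b u v :=
  sum_nonneg fun _ _ ↦ by positivity

theorem primeInvSum_mono (b : ℕ) (hu : u' ≤ u) (hv : v ≤ v') :
    primeInvSum d b u v ≤ primeInvSum d b u' v' :=
  sum_le_sum_of_subset_of_nonneg (filter_subset_filter _ (Ioc_subset_Ioc hu hv))
    fun _ _ _ ↦ by positivity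

theorem primeInvSum_add (b : ℕ) (huv : u ≤ v) (hvw : v ≤ w) :
    primeInvSum d b u v + primeInvSum d b v w = primeInvSum d b u w := by
  simp_rw [primeInvSum, sum_filter]
  exact sum_Ioc_consecutive _ huv hvw

theorem primeInvSum_le (hd : 0 < d) (b : ℕ) (hu : d ≤ u) (huv : u ≤ v) :
    primeInvSum d b u v ≤ (Real.log v - Real.log u + 2) / d := by
  have all_integers := abs_sum_filter_modEq_inv_sub_le hd b (hd.trans_le hu) huv
  calc primeInvSum d b u v ≤ ∑ n ∈ Ioc u v with n ≡ b [MOD d], (n : ℝ)⁻¹ :=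
        sum_le_sum_of_subset_of_nonneg (monotone_filter_right _ fun _ _ h ↦ h.2)
          fun _ _ _ ↦ by positivity
    _ ≤ (Real.log v - Real.log u) / d + 2 / u := by linarith [(abs_le.1 all_integers).2]
    _ ≤ (Real.log v - Real.log u + 2) / d := by
        rw [add_div]
        gcongr

theorem primeInvSum_pow_le {z : ℕ} (hd : 0 < d) (hdz : d ≤ z) (hz : 2 ≤ z) (b J : ℕ) :
    primeInvSum d b (z ^ 3) (z ^ (3 * 2 ^ J)) ≤ 8 * J / d.totient := by
  induction J with
  | zero => simp [primeInvSum]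
  | succ J ih =>
    have hw : z ≤ z ^ 2 ^ J := Nat.le_self_pow (by positivity) z
    have next := sum_primes_modEq_inv_le hd (hdz.trans hw) (hz.trans hw) b
    rw [← pow_mul, ← pow_mul, mul_comm (2 ^ J) 3, show 2 ^ J * 6 = 3 * 2 ^ (J + 1) by ring] at next
    rw [← primeInvSum_add b (Nat.pow_le_pow_right (by lia) _) (Nat.pow_le_pow_right (by lia) _)]
    · calc _ ≤ 8 * (J : ℝ) / d.totient + 8 / d.totient := add_le_add ih next
        _ = 8 * (J + 1 : ℕ) / d.totient := by
          push_cast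
          ring
    · have := Nat.one_le_two_pow (n := J)
      lia
    · rw [pow_succ]
      lia

theorem abs_sum_primes_log_div_sub_sum_inv_le {C : ℝ} {b y k : ℕ} (hy : 0 < y) (hyk : y ≤ k)
    (hd : 0 < d) (hC : ∀ N : ℕ, 0 < N →
      |∑ p ∈ Ioc 0 N with p.Prime ∧ p ≡ b [MOD d], Real.log p / p - Real.log N / d.totient| ≤ C) :
    |∑ p ∈ Ioc y k with p.Prime ∧ p ≡ b [MOD d], Real.log p / p
        - (∑ n ∈ Ioc y k, (n : ℝ)⁻¹) / d.totient| ≤ 2 * C + 1 := by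
  have hφ : (1 : ℝ) ≤ d.totient := mod_cast Nat.totient_pos.2 hd
  have split : ∑ p ∈ Ioc 0 y with p.Prime ∧ p ≡ b [MOD d], Real.log p / p
      + ∑ p ∈ Ioc y k with p.Prime ∧ p ≡ b [MOD d], Real.log p / p
      = ∑ p ∈ Ioc 0 k with p.Prime ∧ p ≡ b [MOD d], Real.log p / p := by
    simp_rw [sum_filter]
    exact sum_Ioc_consecutive _ y.zero_le hyk
  have harmonic : |(∑ n ∈ Ioc y k, (n : ℝ)⁻¹) / d.totient
      - (Real.log k - Real.log y) / d.totient| ≤ 1 := by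
    rw [← sub_div, abs_div, Nat.abs_cast]
    refine div_le_one_of_le₀ ((abs_sum_Ioc_inv_sub_le hy hyk).trans ?_) (by linarith)
    exact (inv_le_one_of_one_le₀ (mod_cast hy)).trans hφ
  rw [sub_div] at harmonic
  have upto_y := hC y hy
  have upto_k := hC k (hy.trans_le hyk)
  rw [abs_le] at *
  constructor <;> linarith

theorem abs_primeInvSum_sub_sum_inv_mul_inv_log_le {C : ℝ} {b y : ℕ} (hy : 2 ≤ y) (N : ℕ)
    (hd : 0 < d) (hC : ∀ N : ℕ, 0 < N →
      |∑ p ∈ Ioc 0 N with p.Prime ∧ p ≡ b [MOD d], Real.log p / p - Real.log N / d.totient| ≤ C) :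
    |primeInvSum d b y N - (∑ n ∈ Ioc y N, (n : ℝ)⁻¹ * (Real.log n)⁻¹) / d.totient|
      ≤ (2 * C + 1) * (Real.log (y + 1 : ℕ))⁻¹ := by
  have C_nonneg : 0 ≤ C := (abs_nonneg _).trans (hC 1 one_pos)
  have log_pos : ∀ n, y ≤ n → 0 < Real.log n := fun n hn ↦ Real.log_pos (mod_cast by lia)
  have partial_le : ∀ k, ‖∑ n ∈ Ioc y k,
      ((if n.Prime ∧ n ≡ b [MOD d] then Real.log n / n else 0) - (n : ℝ)⁻¹ / d.totient)‖
        ≤ 2 * C + 1 := fun k ↦ by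
    rcases le_total y k with hyk | hky
    · rw [sum_sub_distrib, ← sum_filter, ← sum_div]
      exact abs_sum_primes_log_div_sub_sum_inv_le (by lia) hyk hd hC
    · rw [Ioc_eq_empty_of_le hky, sum_empty, norm_zero]
      positivity
  have abel := norm_sum_Ioc_smul_le (f := fun n ↦ (Real.log n)⁻¹) partial_le
    (fun m hm n _ hmn ↦ inv_anti₀ (log_pos m (Set.mem_Ioi.1 hm).le)
      (Real.log_le_log (mod_cast (Set.mem_Ioi.1 hm).pos) (mod_cast hmn)))
    (fun n hn ↦ inv_nonneg.2 (log_pos n hn.le).le) N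
  have expand : ∑ n ∈ Ioc y N, (Real.log n)⁻¹ •
      ((if n.Prime ∧ n ≡ b [MOD d] then Real.log n / n else 0) - (n : ℝ)⁻¹ / d.totient)
      = primeInvSum d b y N - (∑ n ∈ Ioc y N, (n : ℝ)⁻¹ * (Real.log n)⁻¹) / d.totient := by
    rw [primeInvSum, sum_filter, sum_div, ← sum_sub_distrib]
    refine sum_congr rfl fun n hn ↦ ?_
    have := log_pos n (mem_Ioc.1 hn).1.le
    split_ifs <;> simp only [smul_eq_mul] <;> field_simp
    ring
  rwa [expand, Real.norm_eq_abs] at abel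

theorem exists_abs_primeInvSum_sub_le_div_log :
    ∃ C : ℝ, 0 ≤ C ∧ ∀ d b y N : ℕ, 0 < d → b.Coprime d → 2 ≤ y → y ≤ N →
      |primeInvSum d b y N - (logLog N - logLog y) / d.totient| ≤ C * d ^ 3 / Real.log y := by
  obtain ⟨C, hC, mertens⟩ := exists_abs_sum_log_div_sub_le
  refine ⟨2 * C + 2, by linarith, fun d b y N hd hbd hy hyN ↦ ?_⟩
  have : NeZero d := ⟨hd.ne'⟩
  have d_cube : (1 : ℝ) ≤ d ^ 3 := one_le_pow₀ (mod_cast hd)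
  have hφ : (1 : ℝ) ≤ d.totient := mod_cast Nat.totient_pos.2 hd
  have log_y_pos : 0 < Real.log y := Real.log_pos (mod_cast hy)
  have mertens_mod := mertens d b ((ZMod.isUnit_iff_coprime b d).2 hbd)
  simp_rw [ZMod.natCast_eq_natCast_iff] at mertens_mod
  have compare : |(∑ n ∈ Ioc y N, (n : ℝ)⁻¹ * (Real.log n)⁻¹) / d.totient
      - (logLog N - logLog y) / d.totient| ≤ (Real.log y)⁻¹ := by
    rw [← sub_div, abs_div, Nat.abs_cast]
    exact (div_le_self (abs_nonneg _) hφ).trans (abs_sum_Ioc_inv_mul_inv_log_sub_le hy hyN)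
  calc _ ≤ (2 * (C * d ^ 3) + 1) * (Real.log (y + 1 : ℕ))⁻¹ + (Real.log y)⁻¹ :=
        (abs_sub_le _ _ _).trans
          (add_le_add (abs_primeInvSum_sub_sum_inv_mul_inv_log_le hy N hd mertens_mod) compare)
    _ ≤ (2 * (C * d ^ 3) + d ^ 3) * (Real.log y)⁻¹ + d ^ 3 * (Real.log y)⁻¹ := by
        gcongr
        · lia
        · exact le_mul_of_one_le_left (by positivity) d_cube
    _ = (2 * C + 2) * d ^ 3 / Real.log y := by ring

/-- The point beyond which the error term `d³ / log y` of Mertens' theorem modulo `d` is `O(1/d)`;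
below it, primes are counted by the sieve. It is the end of a chain of intervals to which
`primeInvSum_pow_le` applies. -/
def sieveLimit (d : ℕ) : ℕ := max d 2 ^ (3 * 2 ^ (4 * (Nat.log 2 d + 1)))

theorem log_sieveLimit (d : ℕ) :
    Real.log (sieveLimit d) = 3 * 2 ^ (4 * (Nat.log 2 d + 1)) * Real.log (max d 2 : ℕ) := by
  rw [sieveLimit, Nat.cast_pow, Real.log_pow]
  push_cast
  rfl

theorem pow_four_le_log_sieveLimit (d : ℕ) : (d : ℝ) ^ 4 ≤ Real.log (sieveLimit d) := by
  have hd : d ≤ 2 ^ (Nat.log 2 d + 1) := (Nat.lt_pow_succ_log_self one_lt_two d).le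
  have log_ge : Real.log 2 ≤ Real.log (max d 2 : ℕ) :=
    Real.log_le_log two_pos (mod_cast le_max_right d 2)
  calc (d : ℝ) ^ 4 ≤ (2 ^ (Nat.log 2 d + 1)) ^ 4 := by
        gcongr
        exact_mod_cast hd
    _ = 2 ^ (4 * (Nat.log 2 d + 1)) * 1 := by rw [← pow_mul, mul_comm 4, mul_one]
    _ ≤ 2 ^ (4 * (Nat.log 2 d + 1)) * (3 * Real.log (max d 2 : ℕ)) := by
        gcongr
        linarith [Real.log_two_gt_d9]
    _ = Real.log (sieveLimit d) := by
        rw [log_sieveLimit]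
        ring

theorem log_two_mul_natCast (hd : 0 < d) : Real.log (2 * d) = Real.log 2 + Real.log d :=
  Real.log_mul two_ne_zero (mod_cast hd.ne')

theorem two_div_three_le_log_two_mul (hd : 0 < d) : 2 / 3 ≤ Real.log (2 * d) := by
  rw [log_two_mul_natCast hd]
  linarith [Real.log_two_gt_d9, Real.log_natCast_nonneg d]

theorem log_max_two_le (hd : 0 < d) : Real.log (max d 2 : ℕ) ≤ Real.log (2 * d) :=
  Real.log_le_log (mod_cast by lia) (mod_cast (by lia : max d 2 ≤ 2 * d))

theorem natLog_two_add_one_mul_log_two_le (hd : 0 < d) :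
    (Nat.log 2 d + 1 : ℕ) * Real.log 2 ≤ Real.log (2 * d) := by
  rw [← Real.log_pow]
  refine Real.log_le_log (by positivity) ?_
  rw [pow_succ']
  exact_mod_cast Nat.mul_le_mul_left 2 (Nat.pow_log_le_self 2 hd.ne')

theorem logLog_sieveLimit_le (hd : 0 < d) : logLog (sieveLimit d) ≤ 7 * Real.log (2 * d) := by
  have log_pos : 0 < Real.log (max d 2 : ℕ) := Real.log_pos (mod_cast by lia)
  rw [logLog, log_sieveLimit, Real.log_mul (by positivity) log_pos.ne',
    Real.log_mul three_ne_zero (by positivity), Real.log_pow]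
  have log_three : Real.log 3 ≤ 3 - 1 := Real.log_le_sub_one_of_pos three_pos
  have logLog_le := Real.log_le_sub_one_of_pos log_pos
  have natLog_le := natLog_two_add_one_mul_log_two_le hd
  have log_le := log_max_two_le hd
  push_cast at natLog_le logLog_le log_le ⊢
  linarith [two_div_three_le_log_two_mul hd]

theorem primeInvSum_sieveLimit_le (hd : 0 < d) (b : ℕ) :
    primeInvSum d b d (sieveLimit d) ≤ 54 * Real.log (2 * d) / d.totient := by
  set z := max d 2 with hz
  set J := 4 * (Nat.log 2 d + 1) with hJ
  have hdz : d ≤ z ^ 3 := (le_max_left d 2).trans (Nat.le_self_pow three_ne_zero z)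
  have hzY : z ^ 3 ≤ sieveLimit d := by
    refine Nat.pow_le_pow_right (by lia) ?_
    have := Nat.one_le_two_pow (n := J)
    lia
  have log_ge := two_div_three_le_log_two_mul hd
  have start_le : primeInvSum d b d (z ^ 3) ≤ 6 * Real.log (2 * d) / d.totient := by
    refine (primeInvSum_le hd b le_rfl hdz).trans ?_
    have totient_le : (d.totient : ℝ) ≤ d := mod_cast Nat.totient_le d
    have : (0 : ℝ) < d.totient := mod_cast Nat.totient_pos.2 hd
    gcongr
    rw [Nat.cast_pow, Real.log_pow]
    push_cast
    have := log_max_two_le hd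
    rw [← hz] at this
    linarith [Real.log_natCast_nonneg d]
  have chain_le : primeInvSum d b (z ^ 3) (sieveLimit d) ≤ 48 * Real.log (2 * d) / d.totient := by
    refine (primeInvSum_pow_le hd (le_max_left d 2) (le_max_right d 2) b J).trans ?_
    gcongr ?_ / _
    have natLog_le := natLog_two_add_one_mul_log_two_le hd
    rw [hJ]
    push_cast at natLog_le ⊢
    nlinarith [Real.log_two_gt_d9, (Nat.cast_nonneg (Nat.log 2 d) : (0 : ℝ) ≤ _)]
  rw [← primeInvSum_add b hdz hzY]
  refine (add_le_add start_le chain_le).trans_eq ?_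
  ring

theorem abs_primeInvSum_sub_le_of_le_sieveLimit {Q N : ℕ} (hd : 0 < d) (b : ℕ) (hQ : 3 ≤ Q)
    (hdQ : d ≤ Q) (hQN : Q ≤ N) (hN : N ≤ sieveLimit d) :
    |primeInvSum d b Q N - (logLog N - logLog Q) / d.totient|
      ≤ 54 * Real.log (2 * d) / d.totient := by
  have hQ' : (3 : ℝ) ≤ Q := mod_cast hQ
  have mono : logLog Q ≤ logLog N := logLog_le_logLog (by linarith) (mod_cast hQN)
  have logLog_le : logLog N ≤ logLog (sieveLimit d) :=
    logLog_le_logLog (mod_cast by lia) (mod_cast hN)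
  refine abs_sub_le_of_nonneg_of_le (primeInvSum_nonneg ..)
    ((primeInvSum_mono b hdQ hN).trans (primeInvSum_sieveLimit_le hd b))
    (div_nonneg (by linarith) (by positivity)) ?_
  gcongr
  linarith [logLog_nonneg hQ', logLog_sieveLimit_le hd, two_div_three_le_log_two_mul hd]

theorem exists_abs_primeInvSum_sub_le_of_sieveLimit_le :
    ∃ C : ℝ, 0 ≤ C ∧ ∀ d b Q N : ℕ, 0 < d → b.Coprime d → 2 ≤ Q → sieveLimit d ≤ Q → Q ≤ N →
      |primeInvSum d b Q N - (logLog N - logLog Q) / d.totient|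
        ≤ C * Real.log (2 * d) / d.totient := by
  obtain ⟨C, hC, tail⟩ := exists_abs_primeInvSum_sub_le_div_log
  refine ⟨2 * C, by linarith, fun d b Q N hd hbd hQ hlim hQN ↦ ?_⟩
  refine (tail d b Q N hd hbd hQ hQN).trans ?_
  have hlim_pos : 0 < sieveLimit d := pow_pos (by lia) _
  have log_ge : (d : ℝ) ^ 4 ≤ Real.log Q := (pow_four_le_log_sieveLimit d).trans
    (Real.log_le_log (mod_cast hlim_pos) (mod_cast hlim))
  have totient_le : (d.totient : ℝ) ≤ d := mod_cast Nat.totient_le d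
  have : (0 : ℝ) < d.totient := mod_cast Nat.totient_pos.2 hd
  have : (0 : ℝ) < d := mod_cast hd
  calc C * d ^ 3 / Real.log Q ≤ C * d ^ 3 / d ^ 4 := by gcongr
    _ = C / d := by field_simp
    _ ≤ C / d.totient := by gcongr
    _ ≤ 2 * C * Real.log (2 * d) / d.totient := by
        gcongr
        nlinarith [two_div_three_le_log_two_mul hd]

theorem exists_abs_primeInvSum_sub_le :
    ∃ C : ℝ, 0 ≤ C ∧ ∀ d b Q N : ℕ, 0 < d → b.Coprime d → 3 ≤ Q → d ≤ Q → Q ≤ N →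
      |primeInvSum d b Q N - (logLog N - logLog Q) / d.totient|
        ≤ C * Real.log (2 * d) / d.totient := by
  obtain ⟨C, hC, tail⟩ := exists_abs_primeInvSum_sub_le_of_sieveLimit_le
  refine ⟨54 + C, by linarith, fun d b Q N hd hbd hQ hdQ hQN ↦ ?_⟩
  have log_ge := two_div_three_le_log_two_mul hd
  rcases le_total N (sieveLimit d) with hN | hN
  · refine (abs_primeInvSum_sub_le_of_le_sieveLimit hd b hQ hdQ hQN hN).trans ?_
    gcongr
    linarith
  rcases le_total (sieveLimit d) Q with hQlim | hQlim
  · refine (tail d b Q N hd hbd (by lia) hQlim hQN).trans ?_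
    gcongr
    linarith
  have below := abs_primeInvSum_sub_le_of_le_sieveLimit hd b hQ hdQ hQlim le_rfl
  have above := tail d b (sieveLimit d) N hd hbd (by lia) le_rfl hN
  rw [← primeInvSum_add b hQlim hN]
  calc _ = |(primeInvSum d b Q (sieveLimit d) - (logLog (sieveLimit d) - logLog Q) / d.totient)
        + (primeInvSum d b (sieveLimit d) N
          - (logLog N - logLog (sieveLimit d)) / d.totient)| := by
        congr 1
        ring
    _ ≤ 54 * Real.log (2 * d) / d.totient + C * Real.log (2 * d) / d.totient :=
        (abs_add_le _ _).trans (add_le_add below above)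
    _ = (54 + C) * Real.log (2 * d) / d.totient := by ring

end PrimeReciprocals

section PrimeFactors

theorem logLog_three_pos : 0 < logLog 3 := by
  refine Real.log_pos ((Real.lt_log_iff_exp_lt three_pos).2 ?_)
  linarith [Real.exp_one_lt_d9]

theorem one_le_div_logLog_three {x : ℝ} (hx : 3 ≤ x) : 1 ≤ logLog x / logLog 3 :=
  (one_le_div logLog_three_pos).2 (logLog_le_logLog (by norm_num) hx)

theorem exists_sum_primes_inv_le :
    ∃ C : ℝ, 0 ≤ C ∧ ∀ X : ℕ, 3 ≤ X → ∑ p ∈ Ioc 0 X with p.Prime, (p : ℝ)⁻¹ ≤ logLog X + C := by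
  obtain ⟨C, hC, mertens⟩ := exists_abs_primeInvSum_sub_le
  refine ⟨primeInvSum 1 0 0 3 + C * Real.log 2, ?_, fun X hX ↦ ?_⟩
  · have := primeInvSum_nonneg 1 0 0 3
    positivity
  have beyond := (abs_le.1 (mertens 1 0 3 X one_pos (by simp) le_rfl (by lia) hX)).2
  have split := primeInvSum_add (d := 1) 0 (Nat.zero_le 3) hX
  have all : ∑ p ∈ Ioc 0 X with p.Prime, (p : ℝ)⁻¹ = primeInvSum 1 0 0 X := by
    simp only [primeInvSum, Nat.modEq_one, and_true]
  simp only [Nat.totient_one, Nat.cast_one, div_one, mul_one] at beyond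
  have start_nonneg : 0 ≤ logLog (3 : ℕ) := logLog_nonneg (by norm_num)
  linarith

theorem sum_primeFactors_log_le {n : ℕ} (hn : n ≠ 0) :
    ∑ l ∈ n.primeFactors, Real.log l ≤ Real.log n := by
  have prime : ∀ l ∈ n.primeFactors, l.Prime := fun l ↦ Nat.prime_of_mem_primeFactors
  rw [← Real.log_prod fun l hl ↦ Nat.cast_ne_zero.2 (prime l hl).ne_zero, ← Nat.cast_prod]
  refine Real.log_le_log (mod_cast prod_pos fun l hl ↦ (prime l hl).pos) ?_
  exact_mod_cast Nat.le_of_dvd (Nat.pos_of_ne_zero hn) (Nat.prod_primeFactors_dvd n)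

variable {n X : ℕ}

theorem sum_primeFactors_filter_lt_log_div_le (hn : n ≠ 0) (hX : 0 < X) (hnX : Real.log n ≤ X) :
    ∑ l ∈ n.primeFactors with ¬ l ≤ X, Real.log l / l ≤ 1 := by
  calc _ ≤ ∑ l ∈ n.primeFactors with ¬ l ≤ X, Real.log l / X := by
        gcongr with l hl
        exact (not_le.1 (mem_filter.1 hl).2).le
    _ ≤ ∑ l ∈ n.primeFactors, Real.log l / X :=
        sum_le_sum_of_subset_of_nonneg (filter_subset _ _) fun l _ _ ↦
          div_nonneg (Real.log_natCast_nonneg l) X.cast_nonneg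
    _ ≤ 1 := by
        rw [← sum_div]
        exact div_le_one_of_le₀ ((sum_primeFactors_log_le hn).trans hnX) X.cast_nonneg

theorem primeFactors_filter_le_subset : {l ∈ n.primeFactors | l ≤ X} ⊆ {p ∈ Ioc 0 X | p.Prime} :=
  fun l hl ↦ by
    obtain ⟨hl, hlX⟩ := mem_filter.1 hl
    have l_prime := Nat.prime_of_mem_primeFactors hl
    exact mem_filter.2 ⟨mem_Ioc.2 ⟨l_prime.pos, hlX⟩, l_prime⟩

theorem sum_primeFactors_log_div_le (hn : n ≠ 0) (hX : 0 < X) (hnX : Real.log n ≤ X) :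
    ∑ l ∈ n.primeFactors, Real.log l / l ≤ Real.log X + 7 := by
  have small : ∑ l ∈ n.primeFactors with l ≤ X, Real.log l / l ≤ Real.log X + 6 := by
    calc _ ≤ ∑ p ∈ Ioc 0 X with p.Prime, Real.log p / p :=
          sum_le_sum_of_subset_of_nonneg primeFactors_filter_le_subset fun p _ _ ↦
            div_nonneg (Real.log_natCast_nonneg p) p.cast_nonneg
      _ = ∑ p ∈ Ioc 0 X with p.Prime, Λ p / p :=
          sum_congr rfl fun p hp ↦ by rw [vonMangoldt_apply_prime (mem_filter.1 hp).2]
      _ ≤ ∑ n ∈ Ioc 0 X, Λ n / n :=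
          sum_le_sum_of_subset_of_nonneg (filter_subset _ _) fun _ _ _ ↦ by positivity
      _ ≤ Real.log X + 6 := by linarith [(abs_le.1 (abs_sum_Ioc_vonMangoldt_div_sub_log_le hX)).2]
  rw [← sum_filter_add_sum_filter_not _ (· ≤ X)]
  linarith [sum_primeFactors_filter_lt_log_div_le hn hX hnX]

theorem exists_sum_primeFactors_inv_le :
    ∃ C : ℝ, ∀ n X : ℕ, n ≠ 0 → 3 ≤ X → Real.log n ≤ X →
      ∑ l ∈ n.primeFactors, (l : ℝ)⁻¹ ≤ logLog X + C := by
  obtain ⟨C, -, mertens⟩ := exists_sum_primes_inv_le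
  refine ⟨C + 1, fun n X hn hX hnX ↦ ?_⟩
  have small : ∑ l ∈ n.primeFactors with l ≤ X, (l : ℝ)⁻¹ ≤ logLog X + C :=
    (sum_le_sum_of_subset_of_nonneg primeFactors_filter_le_subset fun _ _ _ ↦ by positivity).trans
      (mertens X hX)
  have large : ∑ l ∈ n.primeFactors with ¬ l ≤ X, (l : ℝ)⁻¹ ≤ 1 := by
    refine (sum_le_sum fun l hl ↦ ?_).trans
      (sum_primeFactors_filter_lt_log_div_le hn (by lia) hnX)
    have hl : (3 : ℝ) ≤ l := mod_cast hX.trans (not_le.1 (mem_filter.1 hl).2).le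
    rw [← one_div]
    gcongr
    exact one_le_log_of_three_le hl
  rw [← sum_filter_add_sum_filter_not _ (· ≤ X)]
  linarith

theorem inv_sub_one_le {x : ℝ} (hx : 2 ≤ x) : (x - 1)⁻¹ ≤ x⁻¹ + 2 * (x ^ 2)⁻¹ := by
  have sub_one_pos : 0 < x - 1 := by linarith
  have : 0 < x := by linarith
  rw [inv_le_iff_one_le_mul₀ sub_one_pos]
  field_simp
  nlinarith

theorem sum_primeFactors_inv_sub_one_le (n : ℕ) :
    ∑ l ∈ n.primeFactors, ((l : ℝ) - 1)⁻¹ ≤ ∑ l ∈ n.primeFactors, (l : ℝ)⁻¹ + 2 := by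
  have squares : ∑ l ∈ n.primeFactors, ((l : ℝ) ^ 2)⁻¹ ≤ 1 := by
    refine (sum_le_sum_of_subset_of_nonneg (fun l hl ↦ ?_) fun _ _ _ ↦ by positivity).trans
      ((sum_Ioo_inv_sq_le 1 (n + 1)).trans (by norm_num))
    exact mem_Ioo.2 ⟨(Nat.prime_of_mem_primeFactors hl).one_lt,
      Nat.lt_succ_of_le (Nat.le_of_mem_primeFactors hl)⟩
  calc _ ≤ ∑ l ∈ n.primeFactors, ((l : ℝ)⁻¹ + 2 * ((l : ℝ) ^ 2)⁻¹) := sum_le_sum fun l hl ↦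
        inv_sub_one_le (mod_cast (Nat.prime_of_mem_primeFactors hl).two_le)
    _ = ∑ l ∈ n.primeFactors, (l : ℝ)⁻¹ + 2 * ∑ l ∈ n.primeFactors, ((l : ℝ) ^ 2)⁻¹ := by
        rw [sum_add_distrib, mul_sum]
    _ ≤ _ := by linarith

theorem sum_powerset_prod_mul_add_sum_le {ι : Type*} {g h : ι → ℝ} {P : Finset ι}
    (hg : ∀ i ∈ P, 0 ≤ g i) (hh : ∀ i ∈ P, 0 ≤ h i) (c : ℝ) :
    ∑ s ∈ P.powerset, (∏ i ∈ s, g i) * (c + ∑ i ∈ s, h i)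
      ≤ (∏ i ∈ P, (1 + g i)) * (c + ∑ i ∈ P, g i * h i) := by
  classical
  induction P using Finset.induction_on generalizing c with
  | empty => simp
  | insert l P hl ih =>
    rw [forall_mem_insert] at hg hh
    have with_l : ∑ s ∈ P.powerset, (∏ i ∈ insert l s, g i) * (c + ∑ i ∈ insert l s, h i)
        = g l * ∑ s ∈ P.powerset, (∏ i ∈ s, g i) * (c + h l + ∑ i ∈ s, h i) := by
      rw [mul_sum]
      refine sum_congr rfl fun s hs ↦ ?_
      have hls : l ∉ s := fun hls ↦ hl (mem_powerset.1 hs hls)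
      rw [prod_insert hls, sum_insert hls]
      ring
    have prod_nonneg : 0 ≤ ∏ i ∈ P, (1 + g i) := prod_nonneg fun i hi ↦ by linarith [hg.2 i hi]
    have := hg.1
    have := hh.1
    rw [sum_powerset_insert hl, prod_insert hl, sum_insert hl, with_l]
    calc _ ≤ (∏ i ∈ P, (1 + g i)) * (c + ∑ i ∈ P, g i * h i)
          + g l * ((∏ i ∈ P, (1 + g i)) * (c + h l + ∑ i ∈ P, g i * h i)) := by
          gcongr
          exacts [ih hg.2 hh.2 c, ih hg.2 hh.2 (c + h l)]
      _ = (1 + g l) * (∏ i ∈ P, (1 + g i)) * (c + (g l * h l + ∑ i ∈ P, g i * h i))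
          - (∏ i ∈ P, (1 + g i)) * (g l ^ 2 * h l) := by ring
      _ ≤ _ := sub_le_self _ (by positivity)

theorem sum_divisors_pow_card_mul_log_div_totient_le (D : ℕ) (hn : n ≠ 0) :
    ∑ e ∈ n.divisors with Squarefree e, (D : ℝ) ^ #e.primeFactors * Real.log (2 * e) / e.totient
      ≤ (∏ l ∈ n.primeFactors, (1 + D * ((l : ℝ) - 1)⁻¹))
        * (Real.log 2 + ∑ l ∈ n.primeFactors, D * ((l : ℝ) - 1)⁻¹ * Real.log l) := by
  have prime : ∀ l ∈ n.primeFactors, l.Prime := fun l ↦ Nat.prime_of_mem_primeFactors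
  rw [sum_divisors_filter_squarefree_eq_sum_powerset hn
    fun e ↦ (D : ℝ) ^ #e.primeFactors * Real.log (2 * e) / e.totient]
  refine (sum_congr rfl fun t ht ↦ ?_).trans_le (sum_powerset_prod_mul_add_sum_le
    (fun l hl ↦ ?_) (fun l _ ↦ Real.log_natCast_nonneg l) (Real.log 2))
  · have ht := mem_powerset.1 ht
    have cast_ne_zero : ∀ l ∈ t, (l : ℝ) ≠ 0 := fun l hl ↦
      Nat.cast_ne_zero.2 (prime l (ht hl)).ne_zero
    rw [Nat.primeFactors_prod fun l hl ↦ prime l (ht hl), totient_prod_of_subset_primeFactors ht,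
      Nat.cast_prod, Real.log_mul two_ne_zero (prod_ne_zero_iff.2 cast_ne_zero),
      Real.log_prod cast_ne_zero, prod_mul_distrib, prod_const, prod_inv_distrib]
    ring
  · have : (1 : ℝ) ≤ l := mod_cast (prime l hl).one_le
    exact mul_nonneg D.cast_nonneg (inv_nonneg.2 (by linarith))

theorem exists_prod_primeFactors_one_add_le (D : ℕ) :
    ∃ C : ℝ, 0 ≤ C ∧ ∀ n X : ℕ, n ≠ 0 → 3 ≤ X → Real.log n ≤ X →
      ∏ l ∈ n.primeFactors, (1 + D * ((l : ℝ) - 1)⁻¹) ≤ C * Real.log X ^ D := by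
  obtain ⟨C, inv_le⟩ := exists_sum_primeFactors_inv_le
  refine ⟨Real.exp (D * (C + 2)), by positivity, fun n X hn hX hnX ↦ ?_⟩
  have log_ge : 1 ≤ Real.log X := one_le_log_of_three_le (mod_cast hX)
  calc _ ≤ ∏ l ∈ n.primeFactors, Real.exp (D * ((l : ℝ) - 1)⁻¹) := by
        refine prod_le_prod (fun l hl ↦ ?_) fun l _ ↦ ?_
        · have : (1 : ℝ) ≤ l := mod_cast (Nat.prime_of_mem_primeFactors hl).one_le
          have : 0 ≤ ((l : ℝ) - 1)⁻¹ := inv_nonneg.2 (by linarith)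
          positivity
        · linarith [Real.add_one_le_exp (D * ((l : ℝ) - 1)⁻¹)]
    _ = Real.exp (D * ∑ l ∈ n.primeFactors, ((l : ℝ) - 1)⁻¹) := by
        rw [mul_sum, Real.exp_sum]
    _ ≤ Real.exp (D * (C + 2) + D * logLog X) := by
        rw [← mul_add]
        gcongr
        linarith [sum_primeFactors_inv_sub_one_le n, inv_le n X hn hX hnX]
    _ = Real.exp (D * (C + 2)) * Real.log X ^ D := by
        rw [Real.exp_add, Real.exp_nat_mul (logLog X), logLog, Real.exp_log (by linarith)]

theorem sum_primeFactors_inv_sub_one_mul_log_le (hn : n ≠ 0) (hX : 0 < X)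
    (hnX : Real.log n ≤ X) :
    ∑ l ∈ n.primeFactors, ((l : ℝ) - 1)⁻¹ * Real.log l ≤ 2 * (Real.log X + 7) := by
  calc _ ≤ ∑ l ∈ n.primeFactors, 2 * (Real.log l / l) := by
        refine sum_le_sum fun l hl ↦ ?_
        have two_le : (2 : ℝ) ≤ l := mod_cast (Nat.prime_of_mem_primeFactors hl).two_le
        have inv_le : ((l : ℝ) - 1)⁻¹ ≤ 2 / l := by
          rw [inv_eq_one_div, div_le_div_iff₀ (by linarith) (by linarith)]
          linarith
        calc _ ≤ 2 / l * Real.log l := by gcongr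
          _ = 2 * (Real.log l / l) := by ring
    _ ≤ 2 * (Real.log X + 7) := by
        rw [← mul_sum]
        gcongr
        exact sum_primeFactors_log_div_le hn hX hnX

theorem exists_sum_divisors_pow_card_mul_log_div_totient_le (D : ℕ) :
    ∃ C : ℝ, 0 ≤ C ∧ ∀ n X : ℕ, n ≠ 0 → 3 ≤ X → Real.log n ≤ X →
      ∑ e ∈ n.divisors with Squarefree e, (D : ℝ) ^ #e.primeFactors * Real.log (2 * e) / e.totient
        ≤ C * Real.log X ^ (D + 1) := by
  obtain ⟨C, hC, prod_le⟩ := exists_prod_primeFactors_one_add_le D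
  refine ⟨C * (1 + 16 * D), by positivity, fun n X hn hX hnX ↦ ?_⟩
  have log_ge : 1 ≤ Real.log X := one_le_log_of_three_le (mod_cast hX)
  refine (sum_divisors_pow_card_mul_log_div_totient_le D hn).trans ?_
  calc _ ≤ C * Real.log X ^ D * (1 + D * (2 * (Real.log X + 7))) := by
        have nonneg : ∀ l ∈ n.primeFactors, 0 ≤ ((l : ℝ) - 1)⁻¹ := fun l hl ↦
          inv_nonneg.2 (sub_nonneg.2 (mod_cast (Nat.prime_of_mem_primeFactors hl).one_le))
        simp_rw [mul_assoc (D : ℝ), ← mul_sum]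
        gcongr
        · have := sum_nonneg fun l hl ↦ mul_nonneg (nonneg l hl) (Real.log_natCast_nonneg l)
          positivity
        · exact prod_le n X hn hX hnX
        · linarith [Real.log_two_lt_d9]
        · exact sum_primeFactors_inv_sub_one_mul_log_le hn (by lia) hnX
    _ ≤ C * Real.log X ^ D * ((1 + 16 * D) * Real.log X) := by
        gcongr
        nlinarith [(Nat.cast_nonneg D : (0 : ℝ) ≤ _)]
    _ = C * (1 + 16 * D) * Real.log X ^ (D + 1) := by ring

theorem exists_log_le_natCast_and_log_le_mul_logLog :
    ∃ C : ℝ, 0 ≤ C ∧ ∀ x : ℝ, 3 ≤ x →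
      ∃ X : ℕ, 3 ≤ X ∧ Real.log x ≤ X ∧ Real.log X ≤ C * logLog x := by
  have three_pos := logLog_three_pos
  refine ⟨1 + 3 / logLog 3, by positivity, fun x hx ↦ ⟨⌊Real.log x⌋₊ + 3, by lia, ?_, ?_⟩⟩
  · push_cast
    linarith [Nat.lt_floor_add_one (Real.log x)]
  have log_ge := one_le_log_of_three_le hx
  calc Real.log (⌊Real.log x⌋₊ + 3 : ℕ) ≤ Real.log (4 * Real.log x) := by
        refine Real.log_le_log (by positivity) ?_
        push_cast
        linarith [Nat.floor_le (zero_le_one.trans log_ge)]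
    _ = Real.log 4 + logLog x := Real.log_mul four_ne_zero (by linarith)
    _ ≤ 3 * (logLog x / logLog 3) + logLog x := by
        have : Real.log 4 ≤ 4 - 1 := Real.log_le_sub_one_of_pos four_pos
        linarith [one_le_div_logLog_three hx]
    _ = (1 + 3 / logLog 3) * logLog x := by ring

end PrimeFactors

section CoprimeRoots

theorem card_filter_coprime_eq_card_units (n : ℕ) [NeZero n] (P : ZMod n → Prop)
    [DecidablePred P] : #{a ∈ range n | a.Coprime n ∧ P (a : ℕ)} = #{u : (ZMod n)ˣ | P u} := by
  refine card_bij' (fun a ha ↦ ZMod.unitOfCoprime a (mem_filter.1 ha).2.1)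
    (fun u _ ↦ (u : ZMod n).val) (fun a ha ↦ ?_) (fun u hu ↦ ?_) (fun a ha ↦ ?_) fun u _ ↦ ?_
  · simpa using (mem_filter.1 ha).2.2
  · refine mem_filter.2 ⟨mem_range.2 (ZMod.val_lt _), ZMod.val_coe_unit_coprime u, ?_⟩
    simpa using hu
  · exact ZMod.val_cast_of_lt (mem_range.1 (mem_filter.1 ha).1)
  · ext
    simp

variable {q e : ℕ}

theorem card_unitsMap_fiber_mul_totient [NeZero q] [NeZero e] (h : e ∣ q) (v : (ZMod e)ˣ) :
    #{u : (ZMod q)ˣ | ZMod.unitsMap h u = v} * e.totient = q.totient := by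
  have surj := ZMod.unitsMap_surjective h
  have total := card_eq_sum_card_fiberwise (s := (univ : Finset (ZMod q)ˣ)) (t := univ)
    (f := ZMod.unitsMap h) fun _ _ ↦ mem_coe.2 (mem_univ _)
  have fiber_card (w : (ZMod e)ˣ) :
      #{u : (ZMod q)ˣ | ZMod.unitsMap h u = w} = #{u : (ZMod q)ˣ | ZMod.unitsMap h u = v} :=
    MonoidHom.card_fiber_eq_of_mem_range (ZMod.unitsMap h) (surj w) (surj v)
  rw [sum_congr rfl fun w _ ↦ fiber_card w, sum_const, card_univ, card_univ,
    ZMod.card_units_eq_totient, ZMod.card_units_eq_totient, smul_eq_mul] at total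
  rw [total, mul_comm]

theorem card_filter_unitsMap_mul_totient [NeZero q] [NeZero e] (h : e ∣ q)
    (P : (ZMod e)ˣ → Prop) [DecidablePred P] :
    #{u : (ZMod q)ˣ | P (ZMod.unitsMap h u)} * e.totient = #{v | P v} * q.totient := by
  rw [card_eq_sum_card_fiberwise (t := {v | P v}) (f := ZMod.unitsMap h)
    fun u hu ↦ by simpa using hu, sum_mul, card_eq_sum_ones, sum_mul]
  refine sum_congr rfl fun v hv ↦ ?_
  have hv : P v := (mem_filter.1 hv).2
  rw [one_mul, ← card_unitsMap_fiber_mul_totient h v, filter_filter]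
  congr 2
  ext u
  simp only [mem_filter, mem_univ, true_and, and_iff_right_iff_imp]
  rintro rfl
  exact hv

theorem card_filter_coprime_mul_totient (hq : q ≠ 0) (h : e ∣ q) (P : ZMod e → Prop)
    [DecidablePred P] :
    #{a ∈ range q | a.Coprime q ∧ P (a : ℕ)} * e.totient
      = #{b ∈ range e | b.Coprime e ∧ P (b : ℕ)} * q.totient := by
  have : NeZero q := ⟨hq⟩
  have : NeZero e := ⟨ne_zero_of_dvd_ne_zero hq h⟩
  have reduce := card_filter_coprime_eq_card_units q fun x ↦ P (ZMod.castHom h (ZMod e) x)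
  simp only [map_natCast] at reduce
  rw [reduce, card_filter_coprime_eq_card_units e P]
  exact card_filter_unitsMap_mul_totient h fun v ↦ P v

theorem modEq_of_forall_mem_primeFactors {a b : ℕ} (he : Squarefree e)
    (h : ∀ l ∈ e.primeFactors, a ≡ b [MOD l]) : a ≡ b [MOD e] := by
  rw [Nat.modEq_iff_dvd, Int.natCast_dvd, ← Nat.prod_primeFactors_of_squarefree he]
  exact prod_primes_dvd _ (fun l hl ↦ (Nat.prime_of_mem_primeFactors hl).prime) fun l hl ↦
    Int.natCast_dvd.1 (Nat.modEq_iff_dvd.1 (h l hl))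

variable (F : Polynomial ℤ)

theorem natCast_dvd_eval_iff (n a : ℕ) :
    (n : ℤ) ∣ F.eval (a : ℤ) ↔ (F.map (Int.castRingHom (ZMod n))).IsRoot a := by
  rw [Polynomial.IsRoot, Polynomial.eval_natCast_map, eq_intCast,
    ZMod.intCast_zmod_eq_zero_iff_dvd]

variable {F} in
theorem natCast_dvd_eval_congr {n a b : ℕ} (h : a ≡ b [MOD n]) :
    (n : ℤ) ∣ F.eval (a : ℤ) ↔ (n : ℤ) ∣ F.eval (b : ℤ) := by
  rw [natCast_dvd_eval_iff, natCast_dvd_eval_iff, (ZMod.natCast_eq_natCast_iff a b n).2 h]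

theorem card_filter_prime_dvd_eval_le {l : ℕ} (hl : l.Prime)
    (hlF : ¬ l ∣ F.leadingCoeff.natAbs) :
    #{b ∈ range l | (l : ℤ) ∣ F.eval ((b : ℕ) : ℤ)} ≤ F.natDegree := by
  have : Fact l.Prime := ⟨hl⟩
  set G := F.map (Int.castRingHom (ZMod l)) with hG
  have G_ne_zero : G ≠ 0 := fun hG₀ ↦ hlF <| by
    rw [← Int.natCast_dvd, ← ZMod.intCast_zmod_eq_zero_iff_dvd, Polynomial.leadingCoeff,
      ← eq_intCast (Int.castRingHom _), ← Polynomial.coeff_map, ← hG, hG₀, Polynomial.coeff_zero]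
  calc #{b ∈ range l | (l : ℤ) ∣ F.eval ((b : ℕ) : ℤ)} ≤ #G.roots.toFinset := by
        refine card_le_card_of_injOn (fun b : ℕ ↦ (b : ZMod l)) (fun b hb ↦ ?_)
          fun a ha b hb hab ↦ ?_
        · rw [mem_coe, Multiset.mem_toFinset, Polynomial.mem_roots G_ne_zero]
          exact (natCast_dvd_eval_iff F l b).1 (mem_filter.1 hb).2
        · exact ((ZMod.natCast_eq_natCast_iff a b l).1 hab).eq_of_lt_of_lt
            (mem_range.1 (mem_filter.1 ha).1) (mem_range.1 (mem_filter.1 hb).1)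
    _ ≤ G.natDegree := (Multiset.toFinset_card_le _).trans (Polynomial.card_roots' G)
    _ ≤ F.natDegree := Polynomial.natDegree_map_le

/-- The residue classes modulo `e`, represented in `[0, e)`, that are coprime to `e` and on which
`F` vanishes modulo `e`. -/
def coprimeRoots (e : ℕ) : Finset ℕ :=
  {b ∈ range e | b.Coprime e ∧ (e : ℤ) ∣ F.eval ((b : ℕ) : ℤ)}

theorem card_coprimeRoots_le_prod (he : Squarefree e) :
    #(coprimeRoots F e)
      ≤ ∏ l ∈ e.primeFactors, #{b ∈ range l | (l : ℤ) ∣ F.eval ((b : ℕ) : ℤ)} := by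
  rw [← card_pi]
  refine card_le_card_of_injOn (fun b l _ ↦ b % l) (fun b hb ↦ ?_) fun a ha b hb hab ↦ ?_
  · refine mem_coe.2 (mem_pi.2 fun l hl ↦ mem_filter.2 ⟨mem_range.2 ?_, ?_⟩)
    · exact Nat.mod_lt _ (Nat.pos_of_mem_primeFactors hl)
    · rw [natCast_dvd_eval_congr (Nat.mod_modEq b l)]
      exact (Int.natCast_dvd_natCast.2 (Nat.dvd_of_mem_primeFactors hl)).trans
        (mem_filter.1 hb).2.2
  · exact (modEq_of_forall_mem_primeFactors he fun l hl ↦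
      congrFun (congrFun hab l) hl).eq_of_lt_of_lt
        (mem_range.1 (mem_filter.1 ha).1) (mem_range.1 (mem_filter.1 hb).1)

variable {F}

theorem card_coprimeRoots_le (hF : 0 < F.natDegree) (he : Squarefree e) :
    #(coprimeRoots F e) ≤ F.leadingCoeff.natAbs * F.natDegree ^ #e.primeFactors := by
  have prime : ∀ l ∈ e.primeFactors, l.Prime := fun l ↦ Nat.prime_of_mem_primeFactors
  have leadingCoeff_pos : 0 < F.leadingCoeff.natAbs :=
    Int.natAbs_pos.2 (Polynomial.leadingCoeff_ne_zero.2 (Polynomial.ne_zero_of_natDegree_gt hF))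
  calc #(coprimeRoots F e)
      ≤ ∏ l ∈ e.primeFactors, (if l ∣ F.leadingCoeff.natAbs then l else 1) * F.natDegree := by
        refine (card_coprimeRoots_le_prod F he).trans (prod_le_prod' fun l hl ↦ ?_)
        split_ifs with hlF
        · calc _ ≤ l := (card_filter_le _ _).trans_eq (card_range l)
            _ ≤ l * F.natDegree := Nat.le_mul_of_pos_right l hF
        · rw [one_mul]
          exact card_filter_prime_dvd_eval_le F (prime l hl) hlF
    _ = (∏ l ∈ e.primeFactors with l ∣ F.leadingCoeff.natAbs, l)
          * F.natDegree ^ #e.primeFactors := by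
        rw [prod_mul_distrib, prod_const, prod_filter]
    _ ≤ F.leadingCoeff.natAbs * F.natDegree ^ #e.primeFactors := by
        gcongr
        exact Nat.le_of_dvd leadingCoeff_pos (prod_primes_dvd _
          (fun l hl ↦ (prime l (mem_filter.1 hl).1).prime) fun l hl ↦ (mem_filter.1 hl).2)

variable (F) in
theorem card_filter_coprime_dvd_eval_mul_totient (hq : q ≠ 0) (he : e ∣ q) :
    #{a ∈ range q | a.Coprime q ∧ (e : ℤ) ∣ F.eval ((a : ℕ) : ℤ)} * e.totient
      = #(coprimeRoots F e) * q.totient := by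
  classical
  simp only [coprimeRoots, natCast_dvd_eval_iff]
  exact card_filter_coprime_mul_totient hq he _

theorem sum_divisors_filter_dvd_moebius (hq : q ≠ 0) (n : ℤ) :
    ∑ e ∈ q.divisors with ((e : ℕ) : ℤ) ∣ n, μ e = if Int.gcd n q = 1 then 1 else 0 := by
  have divisors_gcd : {e ∈ q.divisors | ((e : ℕ) : ℤ) ∣ n} = (Int.gcd n q).divisors := by
    ext e
    simp only [mem_filter, Nat.mem_divisors, Int.dvd_gcd_iff, Int.natCast_dvd_natCast, ne_eq, hq,
      not_false_eq_true, and_true, Int.gcd_eq_zero_iff, Int.natCast_eq_zero, and_false]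
    exact and_comm
  rw [divisors_gcd, sum_divisors_moebius]

theorem sum_filter_gcd_eq_sum_divisors {ι : Type*} (s : Finset ι) (hq : q ≠ 0) (n : ι → ℤ)
    (f : ι → ℝ) :
    ∑ i ∈ s with Int.gcd (n i) q = 1, f i
      = ∑ e ∈ q.divisors, (μ e : ℝ) * ∑ i ∈ s with ((e : ℕ) : ℤ) ∣ n i, f i := by
  calc ∑ i ∈ s with Int.gcd (n i) q = 1, f i
      = ∑ i ∈ s, ∑ e ∈ q.divisors, if (e : ℤ) ∣ n i then (μ e : ℝ) * f i else 0 := by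
        rw [sum_filter]
        refine sum_congr rfl fun i _ ↦ ?_
        have detect : ∑ e ∈ q.divisors with ((e : ℕ) : ℤ) ∣ n i, (μ e : ℝ)
            = if Int.gcd (n i) q = 1 then 1 else 0 :=
          mod_cast sum_divisors_filter_dvd_moebius hq (n i)
        rw [← sum_filter, ← sum_mul, detect, ite_mul, one_mul, zero_mul]
    _ = _ := by
        rw [sum_comm]
        exact sum_congr rfl fun e _ ↦ by rw [mul_sum, sum_filter]

end CoprimeRoots

section Alpha

variable (F : Polynomial ℤ) {q : ℕ}

theorem alpha_eq_card_div_totient (q : ℕ) :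
    alpha F q
      = #{a ∈ range q | a.Coprime q ∧ Int.gcd (F.eval ((a : ℕ) : ℤ)) q = 1} / (q.totient : ℝ) := by
  rw [alpha, ← Set.ncard_coe_finset]
  congr 3
  ext a
  simp only [Set.mem_ofPred_eq, coe_filter, mem_range, ← Int.isCoprime_iff_gcd_eq_one,
    IsCoprime.mul_left_iff, Nat.isCoprime_iff_coprime]

theorem alpha_nonneg (q : ℕ) : 0 ≤ alpha F q := by
  unfold alpha
  positivity

theorem alpha_le_one (q : ℕ) : alpha F q ≤ 1 := by
  rw [alpha_eq_card_div_totient, Nat.totient_eq_card_coprime]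
  refine div_le_one_of_le₀ (Nat.cast_le.2 (card_le_card ?_)) (Nat.cast_nonneg _)
  exact monotone_filter_right _ fun a _ ha ↦ ha.1.symm

theorem alpha_eq_sum_divisors (hq : q ≠ 0) :
    alpha F q = ∑ e ∈ q.divisors, (μ e : ℝ) * (#(coprimeRoots F e) / e.totient) := by
  have totient_ne_zero {n : ℕ} (hn : n ≠ 0) : (n.totient : ℝ) ≠ 0 :=
    mod_cast (Nat.totient_pos.2 (Nat.pos_of_ne_zero hn)).ne'
  rw [alpha_eq_card_div_totient, ← filter_filter, card_eq_sum_ones, Nat.cast_sum,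
    sum_filter_gcd_eq_sum_divisors _ hq, sum_div]
  refine sum_congr rfl fun e he ↦ ?_
  have he := Nat.dvd_of_mem_divisors he
  have lift := card_filter_coprime_dvd_eval_mul_totient F hq he
  rw [mul_div_assoc, ← Nat.cast_sum, ← card_eq_sum_ones, filter_filter]
  congr 1
  rw [div_eq_div_iff (totient_ne_zero hq) (totient_ne_zero (ne_zero_of_dvd_ne_zero hq he))]
  exact_mod_cast lift

end Alpha

section CoprimeValues

/-- The sum of `1/p` over the primes `p` in `(u, v]` for which `F(p)` is coprime to `q`. -/
noncomputable def coprimeValuePrimeInvSum (F : Polynomial ℤ) (q u v : ℕ) : ℝ :=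
  ∑ p ∈ Ioc u v with p.Prime ∧ Int.gcd (F.eval ((p : ℕ) : ℤ)) q = 1, (p : ℝ)⁻¹

variable (F : Polynomial ℤ) {q u v w : ℕ}

theorem coprimeValuePrimeInvSum_nonneg (q u v : ℕ) : 0 ≤ coprimeValuePrimeInvSum F q u v :=
  sum_nonneg fun _ _ ↦ by positivity

theorem coprimeValuePrimeInvSum_add (q : ℕ) (huv : u ≤ v) (hvw : v ≤ w) :
    coprimeValuePrimeInvSum F q u v + coprimeValuePrimeInvSum F q v w
      = coprimeValuePrimeInvSum F q u w := by
  simp_rw [coprimeValuePrimeInvSum, sum_filter]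
  exact sum_Ioc_consecutive _ huv hvw

theorem coprimeValuePrimeInvSum_le_sum_primes_inv (q u v : ℕ) :
    coprimeValuePrimeInvSum F q u v ≤ ∑ p ∈ Ioc u v with p.Prime, (p : ℝ)⁻¹ :=
  sum_le_sum_of_subset_of_nonneg (monotone_filter_right _ fun _ _ h ↦ h.1)
    fun _ _ _ ↦ by positivity

theorem sum_primes_dvd_eval_inv_eq {e : ℕ} (he : 0 < e) (heu : e ≤ u) :
    ∑ p ∈ Ioc u v with p.Prime ∧ (e : ℤ) ∣ F.eval ((p : ℕ) : ℤ), (p : ℝ)⁻¹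
      = ∑ b ∈ coprimeRoots F e, primeInvSum e b u v := by
  rw [← sum_fiberwise_of_maps_to (t := coprimeRoots F e) (g := (· % e)) fun p hp ↦ ?_]
  · refine sum_congr rfl fun b hb ↦ ?_
    obtain ⟨hbe, -, hb⟩ := mem_filter.1 hb
    rw [primeInvSum, filter_filter]
    congr 1
    ext p
    have mod_eq_iff : p % e = b ↔ p ≡ b [MOD e] := by
      rw [Nat.ModEq, Nat.mod_eq_of_lt (mem_range.1 hbe)]
    simp only [mem_filter, mod_eq_iff, and_assoc, and_congr_right_iff, and_iff_right_iff_imp]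
    exact fun _ _ hpb ↦ (natCast_dvd_eval_congr hpb).2 hb
  · obtain ⟨hp, p_prime, hpF⟩ := mem_filter.1 hp
    have hep : e < p := heu.trans_lt (mem_Ioc.1 hp).1
    refine mem_filter.2 ⟨mem_range.2 (Nat.mod_lt _ he), ?_, ?_⟩
    · rw [Nat.Coprime, ← Nat.gcd_rec, Nat.gcd_comm]
      exact Nat.coprime_of_lt_prime he.ne' hep p_prime
    · exact (natCast_dvd_eval_congr (Nat.mod_modEq p e)).2 hpF

theorem coprimeValuePrimeInvSum_eq_sum_divisors (v : ℕ) (hq : q ≠ 0) (hqu : q ≤ u) :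
    coprimeValuePrimeInvSum F q u v
      = ∑ e ∈ q.divisors, (μ e : ℝ) * ∑ b ∈ coprimeRoots F e, primeInvSum e b u v := by
  rw [coprimeValuePrimeInvSum, ← filter_filter, sum_filter_gcd_eq_sum_divisors _ hq]
  refine sum_congr rfl fun e he ↦ ?_
  rw [filter_filter, sum_primes_dvd_eval_inv_eq F (Nat.pos_of_mem_divisors he)
    ((Nat.divisor_le he).trans hqu)]

theorem abs_coprimeValuePrimeInvSum_sub_alpha_mul_le {C L : ℝ} (hq : q ≠ 0) (hqu : q ≤ u)
    (hC : ∀ e b : ℕ, 0 < e → b.Coprime e → e ≤ u →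
      |primeInvSum e b u v - L / e.totient| ≤ C * Real.log (2 * e) / e.totient) :
    |coprimeValuePrimeInvSum F q u v - alpha F q * L|
      ≤ ∑ e ∈ q.divisors with Squarefree e,
          #(coprimeRoots F e) * (C * Real.log (2 * e) / e.totient) := by
  rw [coprimeValuePrimeInvSum_eq_sum_divisors F v hq hqu, alpha_eq_sum_divisors F hq, sum_mul,
    ← sum_sub_distrib, sum_filter]
  refine (abs_sum_le_sum_abs _ _).trans (sum_le_sum fun e he ↦ ?_)
  split_ifs with e_squarefree
  · calc |(μ e : ℝ) * ∑ b ∈ coprimeRoots F e, primeInvSum e b u v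
          - μ e * (#(coprimeRoots F e) / e.totient) * L|
        = |(μ e : ℝ)| * |∑ b ∈ coprimeRoots F e, (primeInvSum e b u v - L / e.totient)| := by
          rw [sum_sub_distrib, sum_const, nsmul_eq_mul, ← abs_mul]
          ring_nf
      _ ≤ 1 * ∑ _b ∈ coprimeRoots F e, C * Real.log (2 * e) / e.totient := by
          gcongr
          · exact_mod_cast abs_moebius_le_one
          · exact (abs_sum_le_sum_abs _ _).trans (sum_le_sum fun b hb ↦
              hC e b (Nat.pos_of_mem_divisors he) (mem_filter.1 hb).2.1
                ((Nat.divisor_le he).trans hqu))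
      _ = #(coprimeRoots F e) * (C * Real.log (2 * e) / e.totient) := by
          rw [one_mul, sum_const, nsmul_eq_mul]
  · simp [moebius_eq_zero_of_not_squarefree e_squarefree]

variable {F}

theorem exists_sum_divisors_card_coprimeRoots_mul_le (hF : 0 < F.natDegree) :
    ∃ C : ℝ, 0 ≤ C ∧ ∀ q : ℕ, 0 < q →
      ∑ e ∈ q.divisors with Squarefree e, #(coprimeRoots F e) * (Real.log (2 * e) / e.totient)
        ≤ C * logLog (3 * q) ^ (F.natDegree + 1) := by
  set D := F.natDegree
  set c := (F.leadingCoeff.natAbs : ℝ)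
  obtain ⟨C₁, hC₁, divisor_sum_le⟩ := exists_sum_divisors_pow_card_mul_log_div_totient_le D
  obtain ⟨C₂, hC₂, exists_nat⟩ := exists_log_le_natCast_and_log_le_mul_logLog
  refine ⟨c * C₁ * C₂ ^ (D + 1), by positivity, fun q hq ↦ ?_⟩
  have q_ge : (1 : ℝ) ≤ q := mod_cast hq
  obtain ⟨X, hX, hqX, log_X_le⟩ := exists_nat (3 * q) (by linarith)
  have log_q_le : Real.log q ≤ X :=
    (Real.log_le_log (by linarith) (by linarith)).trans hqX
  calc ∑ e ∈ q.divisors with Squarefree e, #(coprimeRoots F e) * (Real.log (2 * e) / e.totient)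
      ≤ ∑ e ∈ q.divisors with Squarefree e,
          c * D ^ #e.primeFactors * (Real.log (2 * e) / e.totient) := by
        refine sum_le_sum fun e he ↦ ?_
        obtain ⟨-, e_squarefree⟩ := mem_filter.1 he
        have card_le : (#(coprimeRoots F e) : ℝ) ≤ c * D ^ #e.primeFactors :=
          (Nat.cast_le.2 (card_coprimeRoots_le hF e_squarefree)).trans_eq
            (by rw [Nat.cast_mul, Nat.cast_pow])
        have : 0 ≤ Real.log (2 * e) := mod_cast Real.log_natCast_nonneg (2 * e)
        gcongr
    _ = c * ∑ e ∈ q.divisors with Squarefree e,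
          (D : ℝ) ^ #e.primeFactors * Real.log (2 * e) / e.totient := by
        rw [mul_sum]
        exact sum_congr rfl fun e _ ↦ by ring
    _ ≤ c * (C₁ * (C₂ * logLog (3 * q)) ^ (D + 1)) := by
        have := Real.log_natCast_nonneg X
        grw [divisor_sum_le q X hq.ne' hX log_q_le, log_X_le]
    _ = c * C₁ * C₂ ^ (D + 1) * logLog (3 * q) ^ (D + 1) := by ring

theorem exists_abs_coprimeValuePrimeInvSum_sub_le (hF : 0 < F.natDegree) :
    ∃ C : ℝ, ∀ q N : ℕ, 0 < q → 3 * q ≤ N →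
      |coprimeValuePrimeInvSum F q (3 * q) N - alpha F q * (logLog N - logLog (3 * q))|
        ≤ C * logLog (3 * q) ^ (F.natDegree + 1) := by
  obtain ⟨C₁, hC₁, mertens⟩ := exists_abs_primeInvSum_sub_le
  obtain ⟨C₂, -, divisor_sum_le⟩ := exists_sum_divisors_card_coprimeRoots_mul_le hF
  refine ⟨C₁ * C₂, fun q N hq hN ↦ ?_⟩
  have cast_three_mul : ((3 * q : ℕ) : ℝ) = 3 * q := by push_cast; rfl
  have mobius := abs_coprimeValuePrimeInvSum_sub_alpha_mul_le F hq.ne' (by lia)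
    fun e b he hb heq ↦ mertens e b (3 * q) N he hb (by lia) heq hN
  rw [cast_three_mul] at mobius
  refine mobius.trans ?_
  simp_rw [mul_div_assoc, mul_left_comm _ C₁, ← mul_sum]
  rw [mul_assoc]
  exact mul_le_mul_of_nonneg_left (divisor_sum_le q hq) hC₁

theorem sum_range_floor_eq_coprimeValuePrimeInvSum (F : Polynomial ℤ) (q : ℕ) {x : ℝ}
    (hx : 0 ≤ x) :
    ∑ p ∈ range (⌊x⌋₊ + 1) with
        p.Prime ∧ ((p : ℕ) : ℝ) ≤ x ∧ Int.gcd (F.eval (p : ℤ)) q = 1, (1 : ℝ) / p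
      = coprimeValuePrimeInvSum F q 0 ⌊x⌋₊ := by
  simp_rw [coprimeValuePrimeInvSum, one_div]
  congr 1
  ext p
  simp only [mem_filter, mem_range, mem_Ioc, Nat.lt_add_one_iff]
  constructor
  · rintro ⟨hpx, p_prime, -, hpF⟩
    exact ⟨⟨p_prime.pos, hpx⟩, p_prime, hpF⟩
  · rintro ⟨⟨-, hpx⟩, p_prime, hpF⟩
    exact ⟨hpx, p_prime, (Nat.le_floor_iff hx).1 hpx, hpF⟩

theorem abs_logLog_sub_logLog_floor_le_one {x : ℝ} (hx : 3 ≤ x) :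
    |logLog x - logLog ⌊x⌋₊| ≤ 1 := by
  have floor_ge : (3 : ℝ) ≤ ⌊x⌋₊ := mod_cast Nat.le_floor (mod_cast hx)
  have floor_le : (⌊x⌋₊ : ℝ) ≤ x := Nat.floor_le (by linarith)
  have log_floor_ge := one_le_log_of_three_le floor_ge
  have log_two_le : Real.log 2 ≤ 1 := by linarith [Real.log_two_lt_d9]
  have log_le : Real.log x ≤ 2 * Real.log ⌊x⌋₊ := by
    calc Real.log x ≤ Real.log (2 * ⌊x⌋₊) :=
          Real.log_le_log (by linarith) (by linarith [Nat.lt_floor_add_one x])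
      _ = Real.log 2 + Real.log ⌊x⌋₊ := Real.log_mul two_ne_zero (by linarith)
      _ ≤ 2 * Real.log ⌊x⌋₊ := by linarith
  have le : logLog x ≤ 1 + logLog ⌊x⌋₊ := by
    calc logLog x ≤ Real.log (2 * Real.log ⌊x⌋₊) :=
          Real.log_le_log (by linarith [one_le_log_of_three_le hx]) log_le
      _ = Real.log 2 + logLog ⌊x⌋₊ := Real.log_mul two_ne_zero (by linarith)
      _ ≤ 1 + logLog ⌊x⌋₊ := by linarith
  rw [abs_of_nonneg (sub_nonneg.2 (logLog_le_logLog (by linarith) floor_le))]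
  linarith

theorem two_mul_logLog_add_le {A x : ℝ} (hA : 0 ≤ A) (hx : 3 ≤ x) {k : ℕ} (hk : k ≠ 0) :
    2 * logLog x + A ≤ (2 * logLog 3 + A) / logLog 3 ^ k * logLog x ^ k := by
  have logLog_three_pos := logLog_three_pos
  have ratio_ge := one_le_div_logLog_three hx
  calc 2 * logLog x + A = 2 * logLog 3 * (logLog x / logLog 3) + A * 1 := by field_simp
    _ ≤ 2 * logLog 3 * (logLog x / logLog 3) ^ k + A * (logLog x / logLog 3) ^ k := by
        gcongr
        · exact le_self_pow₀ ratio_ge hk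
        · exact one_le_pow₀ ratio_ge
    _ = (2 * logLog 3 + A) / logLog 3 ^ k * logLog x ^ k := by
        rw [div_pow]
        ring

theorem abs_coprimeValuePrimeInvSum_sub_alpha_mul_logLog_le (F : Polynomial ℤ) {C x : ℝ}
    (hq : 0 < q) (hx : 3 * q ≤ x)
    (hC : ∑ p ∈ Ioc 0 (3 * q) with p.Prime, (p : ℝ)⁻¹ ≤ logLog (3 * q) + C) :
    |coprimeValuePrimeInvSum F q 0 ⌊x⌋₊ - alpha F q * logLog x|
      ≤ |coprimeValuePrimeInvSum F q (3 * q) ⌊x⌋₊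
          - alpha F q * (logLog ⌊x⌋₊ - logLog (3 * q))| + (2 * logLog (3 * q) + (C + 1)) := by
  have q_ge : (1 : ℝ) ≤ q := mod_cast hq
  have K_nonneg : 0 ≤ logLog (3 * q) := logLog_nonneg (by linarith)
  have floor_ge : 3 * q ≤ ⌊x⌋₊ := Nat.le_floor (mod_cast hx)
  have small : |coprimeValuePrimeInvSum F q 0 (3 * q)| ≤ logLog (3 * q) + C := by
    rw [abs_of_nonneg (coprimeValuePrimeInvSum_nonneg F q _ _)]
    exact (coprimeValuePrimeInvSum_le_sum_primes_inv F q _ _).trans hC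
  have alpha_mul_le {y : ℝ} : |alpha F q * y| ≤ |y| := by
    rw [abs_mul, abs_of_nonneg (alpha_nonneg F q)]
    exact mul_le_of_le_one_left (abs_nonneg y) (alpha_le_one F q)
  have start : |alpha F q * logLog (3 * q)| ≤ logLog (3 * q) :=
    alpha_mul_le.trans_eq (abs_of_nonneg K_nonneg)
  have rounding : |alpha F q * (logLog x - logLog ⌊x⌋₊)| ≤ 1 :=
    alpha_mul_le.trans (abs_logLog_sub_logLog_floor_le_one (by linarith))
  rw [← coprimeValuePrimeInvSum_add F q (Nat.zero_le _) floor_ge]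
  calc _ = |coprimeValuePrimeInvSum F q 0 (3 * q)
          + (coprimeValuePrimeInvSum F q (3 * q) ⌊x⌋₊
            - alpha F q * (logLog ⌊x⌋₊ - logLog (3 * q)))
          - alpha F q * logLog (3 * q) - alpha F q * (logLog x - logLog ⌊x⌋₊)| := by ring_nf
    _ ≤ |coprimeValuePrimeInvSum F q 0 (3 * q)|
          + |coprimeValuePrimeInvSum F q (3 * q) ⌊x⌋₊
            - alpha F q * (logLog ⌊x⌋₊ - logLog (3 * q))|
          + |alpha F q * logLog (3 * q)| + |alpha F q * (logLog x - logLog ⌊x⌋₊)| := by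
        grw [abs_sub, abs_sub, abs_add_le]
    _ ≤ _ := by linarith

end CoprimeValues

end

open Finset in
/-- **Lemma 2.4.** For a fixed nonconstant `F ∈ ℤ[T]` of degree `D`, every positive integer
`q`, and every real `x ≥ 3q`:
`∑_{p ≤ x, gcd(F(p),q)=1} 1/p = α(q) log log x + O((log log 3q)^{D+1})`. -/
theorem stmt8 (F : Polynomial ℤ) (hFdeg : 0 < F.natDegree) :
    ∃ C : ℝ, ∀ q : ℕ, 0 < q → ∀ x : ℝ, 3 * (q : ℝ) ≤ x →
      |(∑ p ∈ (Finset.range (Nat.floor x + 1)).filter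
            (fun p : ℕ => p.Prime ∧ (p : ℝ) ≤ x ∧ Int.gcd (F.eval (p : ℤ)) (q : ℤ) = 1),
            (1 : ℝ) / p)
          - alpha F q * Real.log (Real.log x)|
        ≤ C * Real.log (Real.log (3 * (q : ℝ))) ^ (F.natDegree + 1) := by
  obtain ⟨C₁, large⟩ := exists_abs_coprimeValuePrimeInvSum_sub_le hFdeg
  obtain ⟨C₂, hC₂, mertens⟩ := exists_sum_primes_inv_le
  set k := F.natDegree + 1
  refine ⟨C₁ + (2 * logLog 3 + (C₂ + 1)) / logLog 3 ^ k, fun q hq x hx ↦ ?_⟩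
  have q_ge : (1 : ℝ) ≤ q := mod_cast hq
  have small : ∑ p ∈ Ioc 0 (3 * q) with p.Prime, (p : ℝ)⁻¹ ≤ logLog (3 * q) + C₂ :=
    mod_cast mertens (3 * q) (by lia)
  rw [sum_range_floor_eq_coprimeValuePrimeInvSum F q (by linarith), add_mul]
  refine (abs_coprimeValuePrimeInvSum_sub_alpha_mul_logLog_le F hq hx small).trans
    (add_le_add ?_ ?_)
  · exact large q ⌊x⌋₊ hq (Nat.le_floor (mod_cast hx))
  · exact two_mul_logLog_add_le (by linarith) (by linarith) F.natDegree.succ_ne_zero
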